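/- arXiv:0804.1077 — 4 statements merged into one kernel-verified Lean document; each statement's English description precedes it below -/
import Mathlib

section
/- There exists a ℂ-bialgebra structure (Δ, ε) on U_{K,L,norm} (compatible with its algebra structure) satisfying Δ(K) = K ⊗ K, Δ(K̄) = K̄ ⊗ K̄, Δ(L) = L ⊗ L + L ⊗ K + K ⊗ L, Δ(L̄) = L̄ ⊗ L̄ + L̄ ⊗ K̄ + K̄ ⊗ L̄, Δ(E) = 1 ⊗ E + E ⊗ (K + L), Δ(F) = F ⊗ 1 + (K̄ + L̄) ⊗ F, ε(K) = ε(K̄) = 1, ε(L) = ε(L̄) = ε(E) = ε(F) = 0, and there exists a ℂ-linear algebra antihomomorphism T : U_{K,L,norm} → U_{K,L,norm} with T(K) = K̄, T(K̄) = K, T(L) = L̄, T(L̄) = L, T(E) = −E(K̄ + L̄), T(F) = −(K + L)F, such that, with respect to the convolution A ⋆ B = μ ∘ (A ⊗ B) ∘ Δ on linear endomorphisms, T is von Neumann regular: id ⋆ T ⋆ id = id and T ⋆ id ⋆ T = T. -/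
/-!
Put `G = K + L`, `G⁻¹ = K̄ + L̄` and `P = K K̄`. The relations say exactly that `G`, `G⁻¹`, `E`, `F`
satisfy the relations of `U_q(sl₂)` and that `P` is a central idempotent, with `K = GP`,
`K̄ = G⁻¹P`, `L = G(1 - P)`, `L̄ = G⁻¹(1 - P)` (`liftU`, `qdata`, `unorm_induct`). In these
generators the prescribed maps are the usual ones of `U_q(sl₂)`, together with
`Δ(P) = P ⊗ P`, `ε(P) = 1`, `T(P) = P`; so `Unorm q` is `U_q(sl₂)` tensored with the monoid
bialgebra of `{1, P}`, and the bialgebra axioms are checked on the generators `G, G⁻¹, P, E, F`.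

For regularity, `id ⋆ T` and `T ⋆ id` both send `G, G⁻¹ ↦ 1`, `P ↦ P`, `E, F ↦ 0`. These values are
central, which forces both maps to be multiplicative (`conv_mul_of_right`, `conv_mul_of_left`), hence
equal to one endomorphism `locUnit` with central image. Centrality makes `locUnit ⋆ id`
multiplicative and `locUnit ⋆ T` antimultiplicative, and on generators they agree with `id` and `T`.
-/

noncomputable section

inductive G6 : Type | K | Kb | L | Lb | E | F

abbrev FA6 : Type := FreeAlgebra ℂ G6

def XK : FA6 := FreeAlgebra.ι ℂ G6.K
def XKb : FA6 := FreeAlgebra.ι ℂ G6.Kb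
def XL : FA6 := FreeAlgebra.ι ℂ G6.L
def XLb : FA6 := FreeAlgebra.ι ℂ G6.Lb
def XE : FA6 := FreeAlgebra.ι ℂ G6.E
def XF : FA6 := FreeAlgebra.ι ℂ G6.F

/-- Relations of `U_{K,L,norm}`. -/
inductive relNorm (q : ℂ) : FA6 → FA6 → Prop
  | kkk : relNorm q (XK * XKb * XK) XK
  | kbk : relNorm q (XKb * XK * XKb) XKb
  | kc : relNorm q (XK * XKb) (XKb * XK)
  | lll : relNorm q (XL * XLb * XL) XL
  | lbl : relNorm q (XLb * XL * XLb) XLb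
  | lc : relNorm q (XL * XLb) (XLb * XL)
  | pq : relNorm q (XK * XKb + XL * XLb) 1
  | ke : relNorm q (XK * XE) (q ^ 2 • (XE * XK))
  | le : relNorm q (XL * XE) (q ^ 2 • (XE * XL))
  | kbe : relNorm q (XKb * XE) ((q ^ 2)⁻¹ • (XE * XKb))
  | lbe : relNorm q (XLb * XE) ((q ^ 2)⁻¹ • (XE * XLb))
  | kf : relNorm q (XK * XF) ((q ^ 2)⁻¹ • (XF * XK))
  | lf : relNorm q (XL * XF) ((q ^ 2)⁻¹ • (XF * XL))
  | kbf : relNorm q (XKb * XF) (q ^ 2 • (XF * XKb))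
  | lbf : relNorm q (XLb * XF) (q ^ 2 • (XF * XLb))
  | ef : relNorm q (XE * XF - XF * XE)
      ((q - q⁻¹)⁻¹ • ((XK + XL) - (XKb + XLb)))

/-- The algebra `U_{K,L,norm}`. -/
abbrev Unorm (q : ℂ) : Type := RingQuot (relNorm q)

def nK (q : ℂ) : Unorm q := RingQuot.mkAlgHom ℂ (relNorm q) XK
def nKb (q : ℂ) : Unorm q := RingQuot.mkAlgHom ℂ (relNorm q) XKb
def nL (q : ℂ) : Unorm q := RingQuot.mkAlgHom ℂ (relNorm q) XL
def nLb (q : ℂ) : Unorm q := RingQuot.mkAlgHom ℂ (relNorm q) XLb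
def nE (q : ℂ) : Unorm q := RingQuot.mkAlgHom ℂ (relNorm q) XE
def nF (q : ℂ) : Unorm q := RingQuot.mkAlgHom ℂ (relNorm q) XF
def nP (q : ℂ) : Unorm q := nK q * nKb q
def nQ (q : ℂ) : Unorm q := nL q * nLb q

open scoped TensorProduct

variable {U : Type} [Ring U] [Algebra ℂ U]

/-- Convolution `A ⋆ B = μ ∘ (A ⊗ B) ∘ Δ` of linear endomorphisms. -/
def conv (Δ : U →ₐ[ℂ] U ⊗[ℂ] U) (A B : U →ₗ[ℂ] U) : U →ₗ[ℂ] U :=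
  (LinearMap.mul' ℂ U).comp ((TensorProduct.map A B).comp Δ.toLinearMap)

/-- Coassociativity of a comultiplication. -/
def IsCoassoc (Δ : U →ₐ[ℂ] U ⊗[ℂ] U) : Prop :=
  ∀ x : U, (TensorProduct.assoc ℂ U U U)
      ((TensorProduct.map Δ.toLinearMap LinearMap.id) (Δ x)) =
    (TensorProduct.map LinearMap.id Δ.toLinearMap) (Δ x)

/-- The counit axioms. -/
def IsCounit (Δ : U →ₐ[ℂ] U ⊗[ℂ] U) (ε : U →ₐ[ℂ] ℂ) : Prop :=
  (∀ x : U, (TensorProduct.lid ℂ U)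
      ((TensorProduct.map ε.toLinearMap LinearMap.id) (Δ x)) = x) ∧
  (∀ x : U, (TensorProduct.rid ℂ U)
      ((TensorProduct.map LinearMap.id ε.toLinearMap) (Δ x)) = x)

/-- The "unit ∘ counit" endomorphism `η ∘ ε`. -/
def unitCounit (ε : U →ₐ[ℂ] ℂ) : U →ₗ[ℂ] U :=
  (Algebra.linearMap ℂ U).comp ε.toLinearMap

/-! ### A presentation by `K + L`, `K̄ + L̄`, `P`, `E`, `F` -/

/-- `a * b = c` in the form needed to rewrite inside right-associated products. -/
lemma mul_mul_of_eq {A : Type} [Ring A] {a b c : A} (h : a * b = c) (x : A) :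
    a * (b * x) = c * x := by rw [← mul_assoc, h]

/-- Five elements of an algebra `A` behaving like `K + L`, `K̄ + L̄`, `P`, `E`, `F` in `Unorm q`:
an invertible `g` with inverse `gi`, and `e`, `f`, form a `U_q(sl₂)`-tuple, and `p` is an
idempotent commuting with all of them. -/
structure QData (q : ℂ) {A : Type} [Ring A] [Algebra ℂ A] (g gi p e f : A) : Prop where
  g_gi : g * gi = 1
  gi_g : gi * g = 1
  pp : p * p = p
  pg : p * g = g * p
  pe : p * e = e * p
  pf : p * f = f * p
  ge : g * e = q ^ 2 • (e * g)
  gf : g * f = (q ^ 2)⁻¹ • (f * g)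
  ef : e * f - f * e = (q - q⁻¹)⁻¹ • (g - gi)

namespace QData

variable {q : ℂ} {A : Type} [Ring A] [Algebra ℂ A] {g gi p e f : A}

lemma pgi (h : QData q g gi p e f) : p * gi = gi * p := by
  calc p * gi = gi * g * p * gi := by rw [h.gi_g, one_mul]
    _ = gi * (p * g) * gi := by rw [h.pg]; simp only [mul_assoc]
    _ = gi * p * (g * gi) := by simp only [mul_assoc]
    _ = gi * p := by rw [h.g_gi, mul_one]

lemma gie (h : QData q g gi p e f) (hq : q ≠ 0) : gi * e = (q ^ 2)⁻¹ • (e * gi) := by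
  have : e * gi = q ^ 2 • (gi * e) := by
    calc e * gi = gi * (g * e) * gi := by rw [← mul_assoc, h.gi_g, one_mul]
      _ = q ^ 2 • (gi * e * (g * gi)) := by
        rw [h.ge]; simp only [mul_assoc, mul_smul_comm, smul_mul_assoc]
      _ = q ^ 2 • (gi * e) := by rw [h.g_gi, mul_one]
  rw [this, inv_smul_smul₀ (pow_ne_zero 2 hq)]

lemma gif (h : QData q g gi p e f) (hq : q ≠ 0) : gi * f = q ^ 2 • (f * gi) := by
  have : f * gi = (q ^ 2)⁻¹ • (gi * f) := by
    calc f * gi = gi * (g * f) * gi := by rw [← mul_assoc, h.gi_g, one_mul]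
      _ = (q ^ 2)⁻¹ • (gi * f * (g * gi)) := by
        rw [h.gf]; simp only [mul_assoc, mul_smul_comm, smul_mul_assoc]
      _ = (q ^ 2)⁻¹ • (gi * f) := by rw [h.g_gi, mul_one]
  rw [this, smul_inv_smul₀ (pow_ne_zero 2 hq)]

lemma add_gi_neg (h : QData q g gi p e f) : f + gi * -(g * f) = 0 := by
  rw [mul_neg, ← mul_assoc, h.gi_g, one_mul, add_neg_cancel]

lemma add_neg_g (h : QData q g gi p e f) : e + -(e * gi) * g = 0 := by
  rw [neg_mul, mul_assoc, h.gi_g, mul_one, add_neg_cancel]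

/-- The relations are preserved by the formulas for the comultiplication. -/
lemma comul (h : QData q g gi p e f) (hq : q ≠ 0) :
    QData q (g ⊗ₜ[ℂ] g) (gi ⊗ₜ[ℂ] gi) (p ⊗ₜ[ℂ] p) (1 ⊗ₜ[ℂ] e + e ⊗ₜ[ℂ] g) (f ⊗ₜ[ℂ] 1 + gi ⊗ₜ[ℂ] f) := by
  constructor
  · simp [h.g_gi, Algebra.TensorProduct.one_def]
  · simp [h.gi_g, Algebra.TensorProduct.one_def]
  · simp [h.pp]
  · simp [h.pg]
  · simp [mul_add, add_mul, h.pg, h.pe]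
  · simp [mul_add, add_mul, h.pgi, h.pf]
  · simp [mul_add, add_mul, h.ge, TensorProduct.tmul_smul, TensorProduct.smul_tmul']
  · simp [mul_add, add_mul, h.gf, h.g_gi, h.gi_g, TensorProduct.tmul_smul, TensorProduct.smul_tmul']
  · have e1 : e * f = f * e + (q - q⁻¹)⁻¹ • (g - gi) := by
      rw [← h.ef]; abel
    -- the cross terms `(e gi) ⊗ (g f)` and `(gi e) ⊗ (f g)` agree: the two powers of `q` cancel
    simp only [mul_add, add_mul, Algebra.TensorProduct.tmul_mul_tmul, one_mul, mul_one, e1,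
      h.gie hq, h.gf, TensorProduct.tmul_add, TensorProduct.add_tmul, TensorProduct.tmul_sub,
      TensorProduct.sub_tmul, TensorProduct.tmul_smul, ← TensorProduct.smul_tmul', smul_sub]
    abel

/-- The relations are preserved, in the opposite algebra, by the formulas for `T`. -/
lemma antip (h : QData q g gi p e f) (hq : q ≠ 0) :
    QData q (MulOpposite.op gi) (MulOpposite.op g) (MulOpposite.op p)
      (MulOpposite.op (-(e * gi))) (MulOpposite.op (-(g * f))) := by
  have m := @mul_mul_of_eq A _
  have hq2 : q ^ 2 ≠ 0 := pow_ne_zero 2 hq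
  constructor
  · rw [← MulOpposite.op_mul, h.g_gi, MulOpposite.op_one]
  · rw [← MulOpposite.op_mul, h.gi_g, MulOpposite.op_one]
  · rw [← MulOpposite.op_mul, h.pp]
  · rw [← MulOpposite.op_mul, ← MulOpposite.op_mul, h.pgi]
  · rw [← MulOpposite.op_mul, ← MulOpposite.op_mul]
    simp only [neg_mul, mul_neg, mul_assoc, ← h.pgi]
    simp only [← mul_assoc, h.pe]
  · rw [← MulOpposite.op_mul, ← MulOpposite.op_mul]
    simp only [neg_mul, mul_neg, mul_assoc, ← h.pf]
    simp only [← mul_assoc, h.pg]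
  · rw [← MulOpposite.op_mul, ← MulOpposite.op_mul, ← MulOpposite.op_smul]
    simp only [neg_mul, mul_neg, m (h.gie hq), smul_mul_assoc, smul_neg, smul_inv_smul₀ hq2,
      mul_assoc]
  · rw [← MulOpposite.op_mul, ← MulOpposite.op_mul, ← MulOpposite.op_smul]
    simp only [neg_mul, mul_neg, m h.gi_g, mul_assoc, one_mul, smul_neg]
    rw [m h.gf, smul_mul_assoc, mul_assoc, h.g_gi, mul_one]
  · rw [← MulOpposite.op_mul, ← MulOpposite.op_mul, ← MulOpposite.op_sub, ← MulOpposite.op_sub,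
      ← MulOpposite.op_smul]
    congr 1
    have e1 : f * e = e * f - (q - q⁻¹)⁻¹ • (g - gi) := by
      rw [← h.ef]; abel
    simp only [neg_mul, mul_neg, neg_neg, mul_assoc, m h.gi_g, one_mul]
    rw [m h.gf, smul_mul_assoc, mul_assoc, m h.ge, smul_mul_assoc, mul_smul_comm,
      inv_smul_smul₀ hq2, mul_assoc, h.g_gi, mul_one, e1, smul_sub, smul_sub]
    abel

end QData

/-- The values of the homomorphism attached to a `QData` on the free generators:
`K ↦ gp`, `L ↦ g(1 - p)`, and similarly for `K̄`, `L̄`. -/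
def genMap {A : Type} [Ring A] (g gi p e f : A) : G6 → A
  | .K => g * p
  | .Kb => gi * p
  | .L => g * (1 - p)
  | .Lb => gi * (1 - p)
  | .E => e
  | .F => f

section lift

variable {q : ℂ} {A : Type} [Ring A] [Algebra ℂ A] {g gi p e f : A}

lemma genMap_rel (hq : q ≠ 0) (h : QData q g gi p e f) ⦃x y : FA6⦄ (r : relNorm q x y) :
    FreeAlgebra.lift ℂ (genMap g gi p e f) x = FreeAlgebra.lift ℂ (genMap g gi p e f) y := by
  have m := @mul_mul_of_eq A _
  have h1 := h.g_gi
  have h2 := h.gi_g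
  have h3 := h.pp
  have h4 := h.pg
  have h5 := h.pe
  have h6 := h.pf
  have h7 := h.ge
  have h8 := h.gf
  have h9 := h.pgi
  have h10 := h.gie hq
  have h11 := h.gif hq
  cases r <;>
    simp only [XK, XKb, XL, XLb, XE, XF, map_mul, map_add, map_sub, map_smul, map_one,
      FreeAlgebra.lift_ι_apply, genMap, mul_assoc, sub_mul, mul_sub, mul_one, one_mul,
      h1, h2, h3, h4, h5, h6, h7, h8, h9, h10, h11, m h1, m h2, m h4, m h9,
      m h7, m h8, m h10, m h11, smul_mul_assoc, smul_sub]
  case ef => rw [h.ef, ← smul_sub]; simp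
  all_goals simp

/-- The homomorphism `Unorm q → A` with `K + L ↦ g`, `K̄ + L̄ ↦ gi`, `P ↦ p`, `E ↦ e`, `F ↦ f`. -/
def liftU (hq : q ≠ 0) (h : QData q g gi p e f) : Unorm q →ₐ[ℂ] A :=
  RingQuot.liftAlgHom ℂ ⟨FreeAlgebra.lift ℂ (genMap g gi p e f), genMap_rel hq h⟩

variable (hq : q ≠ 0) (h : QData q g gi p e f)

lemma liftU_K : liftU hq h (nK q) = g * p := by simp [liftU, nK, XK, genMap]
lemma liftU_Kb : liftU hq h (nKb q) = gi * p := by simp [liftU, nKb, XKb, genMap]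
lemma liftU_L : liftU hq h (nL q) = g * (1 - p) := by simp [liftU, nL, XL, genMap]
lemma liftU_Lb : liftU hq h (nLb q) = gi * (1 - p) := by simp [liftU, nLb, XLb, genMap]
lemma liftU_E : liftU hq h (nE q) = e := by simp [liftU, nE, XE, genMap]
lemma liftU_F : liftU hq h (nF q) = f := by simp [liftU, nF, XF, genMap]

end lift

/-- The element `K + L`, which is invertible and group-like. -/
def nG (q : ℂ) : Unorm q := nK q + nL q
/-- The inverse `K̄ + L̄` of `K + L`. -/
def nGi (q : ℂ) : Unorm q := nKb q + nLb q

section relations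

variable (q : ℂ)

lemma mk_rel {x y : FA6} (r : relNorm q x y) :
    RingQuot.mkAlgHom ℂ (relNorm q) x = RingQuot.mkAlgHom ℂ (relNorm q) y :=
  RingQuot.mkAlgHom_rel ℂ r

lemma n_kkk : nK q * nKb q * nK q = nK q := by
  simpa only [nK, nKb, nL, nLb, nE, nF, map_mul, map_add, map_sub, map_smul, map_one] using mk_rel q .kkk
lemma n_kbk : nKb q * nK q * nKb q = nKb q := by
  simpa only [nK, nKb, nL, nLb, nE, nF, map_mul, map_add, map_sub, map_smul, map_one] using mk_rel q .kbk
lemma n_kc : nK q * nKb q = nKb q * nK q := by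
  simpa only [nK, nKb, nL, nLb, nE, nF, map_mul, map_add, map_sub, map_smul, map_one] using mk_rel q .kc
lemma n_lll : nL q * nLb q * nL q = nL q := by
  simpa only [nK, nKb, nL, nLb, nE, nF, map_mul, map_add, map_sub, map_smul, map_one] using mk_rel q .lll
lemma n_lbl : nLb q * nL q * nLb q = nLb q := by
  simpa only [nK, nKb, nL, nLb, nE, nF, map_mul, map_add, map_sub, map_smul, map_one] using mk_rel q .lbl
lemma n_lc : nL q * nLb q = nLb q * nL q := by
  simpa only [nK, nKb, nL, nLb, nE, nF, map_mul, map_add, map_sub, map_smul, map_one] using mk_rel q .lc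
lemma n_pq : nK q * nKb q + nL q * nLb q = 1 := by
  simpa only [nK, nKb, nL, nLb, nE, nF, map_mul, map_add, map_sub, map_smul, map_one] using mk_rel q .pq
lemma n_ke : nK q * nE q = q ^ 2 • (nE q * nK q) := by
  simpa only [nK, nKb, nL, nLb, nE, nF, map_mul, map_add, map_sub, map_smul, map_one] using mk_rel q .ke
lemma n_le : nL q * nE q = q ^ 2 • (nE q * nL q) := by
  simpa only [nK, nKb, nL, nLb, nE, nF, map_mul, map_add, map_sub, map_smul, map_one] using mk_rel q .le
lemma n_kbe : nKb q * nE q = (q ^ 2)⁻¹ • (nE q * nKb q) := by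
  simpa only [nK, nKb, nL, nLb, nE, nF, map_mul, map_add, map_sub, map_smul, map_one] using mk_rel q .kbe
lemma n_kf : nK q * nF q = (q ^ 2)⁻¹ • (nF q * nK q) := by
  simpa only [nK, nKb, nL, nLb, nE, nF, map_mul, map_add, map_sub, map_smul, map_one] using mk_rel q .kf
lemma n_lf : nL q * nF q = (q ^ 2)⁻¹ • (nF q * nL q) := by
  simpa only [nK, nKb, nL, nLb, nE, nF, map_mul, map_add, map_sub, map_smul, map_one] using mk_rel q .lf
lemma n_kbf : nKb q * nF q = q ^ 2 • (nF q * nKb q) := by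
  simpa only [nK, nKb, nL, nLb, nE, nF, map_mul, map_add, map_sub, map_smul, map_one] using mk_rel q .kbf
lemma n_ef : nE q * nF q - nF q * nE q =
    (q - q⁻¹)⁻¹ • ((nK q + nL q) - (nKb q + nLb q)) := by
  simpa only [nK, nKb, nL, nLb, nE, nF, map_mul, map_add, map_sub, map_smul, map_one] using mk_rel q .ef

lemma nPQ : nL q * nLb q = 1 - nP q := by
  rw [nP, ← n_pq q]; abel
lemma P_K : nP q * nK q = nK q := n_kkk q
lemma K_P : nK q * nP q = nK q := by rw [nP, n_kc, ← mul_assoc, n_kkk]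
lemma Kb_P : nKb q * nP q = nKb q := by rw [nP, ← mul_assoc, n_kbk]
lemma P_Kb : nP q * nKb q = nKb q := by rw [nP, n_kc, n_kbk]
lemma P_L : nP q * nL q = 0 := by
  have := n_lll q
  rwa [nPQ, sub_mul, one_mul, sub_eq_self] at this
lemma L_P : nL q * nP q = 0 := by
  have := n_lll q
  rwa [mul_assoc, ← n_lc, nPQ, mul_sub, mul_one, sub_eq_self] at this
lemma P_Lb : nP q * nLb q = 0 := by
  have := n_lbl q
  rwa [← n_lc, nPQ, sub_mul, one_mul, sub_eq_self] at this
lemma Lb_P : nLb q * nP q = 0 := by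
  have := n_lbl q
  rwa [mul_assoc, nPQ, mul_sub, mul_one, sub_eq_self] at this

lemma G_P : nG q * nP q = nK q := by rw [nG, add_mul, K_P, L_P, add_zero]
lemma Gi_P : nGi q * nP q = nKb q := by rw [nGi, add_mul, Kb_P, Lb_P, add_zero]
lemma G_Q : nG q * (1 - nP q) = nL q := by rw [mul_sub, G_P, mul_one, nG]; abel
lemma Gi_Q : nGi q * (1 - nP q) = nLb q := by rw [mul_sub, Gi_P, mul_one, nGi]; abel

lemma K_Lb : nK q * nLb q = 0 := by rw [← K_P, mul_assoc, P_Lb, mul_zero]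
lemma L_Kb : nL q * nKb q = 0 := by rw [← P_Kb, ← mul_assoc, L_P, zero_mul]
lemma Kb_L : nKb q * nL q = 0 := by rw [← Kb_P, mul_assoc, P_L, mul_zero]
lemma Lb_K : nLb q * nK q = 0 := by rw [← P_K, ← mul_assoc, Lb_P, zero_mul]

variable {q} in
lemma qdata (hq : q ≠ 0) : QData q (nG q) (nGi q) (nP q) (nE q) (nF q) where
  g_gi := by
    rw [nG, nGi, add_mul, mul_add, mul_add, K_Lb, L_Kb, add_zero, zero_add, n_pq]
  gi_g := by
    rw [nG, nGi, add_mul, mul_add, mul_add, Kb_L, Lb_K, add_zero, zero_add, ← n_kc, ← n_lc, n_pq]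
  pp := by
    nth_rw 2 [nP]
    rw [← mul_assoc, P_K, nP]
  pg := by rw [G_P, nG, mul_add, P_K, P_L, add_zero]
  pe := by
    rw [nP, mul_assoc, n_kbe, mul_smul_comm, ← mul_assoc, n_ke, smul_mul_assoc,
      inv_smul_smul₀ (pow_ne_zero 2 hq), mul_assoc]
  pf := by
    rw [nP, mul_assoc, n_kbf, mul_smul_comm, ← mul_assoc, n_kf, smul_mul_assoc,
      smul_inv_smul₀ (pow_ne_zero 2 hq), mul_assoc]
  ge := by rw [nG, add_mul, n_ke, n_le, mul_add, smul_add]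
  gf := by rw [nG, add_mul, n_kf, n_lf, mul_add, smul_add]
  ef := by rw [n_ef, nG, nGi]

end relations

lemma one_add_neg_one_smul {A : Type} [Ring A] [Algebra ℂ A] (a : A) :
    1 + (-1 : ℂ) • a = 1 - a := by
  rw [neg_one_smul, ← sub_eq_add_neg]

/-- `Unorm q` is generated as an algebra by `K + L`, `K̄ + L̄`, `P`, `E`, `F`. -/
lemma unorm_induct {q : ℂ} {C : Unorm q → Prop} (h1 : C 1)
    (hG : C (nG q)) (hGi : C (nGi q)) (hP : C (nP q)) (hE : C (nE q)) (hF : C (nF q))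
    (hsmul : ∀ (c : ℂ) x, C x → C (c • x)) (hadd : ∀ x y, C x → C y → C (x + y))
    (hmul : ∀ x y, C x → C y → C (x * y)) (x : Unorm q) : C x := by
  obtain ⟨a, rfl⟩ := RingQuot.mkAlgHom_surjective ℂ (relNorm q) x
  have hQ : C (1 - nP q) := by
    have := hadd _ _ h1 (hsmul (-1) _ hP)
    rwa [one_add_neg_one_smul] at this
  induction a using FreeAlgebra.induction with
  | grade0 r => rw [AlgHom.commutes, Algebra.algebraMap_eq_smul_one]; exact hsmul _ _ h1
  | grade1 y =>
    cases y
    · exact (G_P q ▸ hmul _ _ hG hP : C (nK q))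
    · exact (Gi_P q ▸ hmul _ _ hGi hP : C (nKb q))
    · exact (G_Q q ▸ hmul _ _ hG hQ : C (nL q))
    · exact (Gi_Q q ▸ hmul _ _ hGi hQ : C (nLb q))
    · exact hE
    · exact hF
  | mul a b ha hb => rw [map_mul]; exact hmul _ _ ha hb
  | add a b ha hb => rw [map_add]; exact hadd _ _ ha hb

lemma unorm_ext {q : ℂ} {A : Type} [Semiring A] [Algebra ℂ A] {φ ψ : Unorm q →ₐ[ℂ] A}
    (hG : φ (nG q) = ψ (nG q)) (hGi : φ (nGi q) = ψ (nGi q)) (hP : φ (nP q) = ψ (nP q))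
    (hE : φ (nE q) = ψ (nE q)) (hF : φ (nF q) = ψ (nF q)) : φ = ψ := by
  refine AlgHom.ext fun x => ?_
  exact unorm_induct (C := fun x => φ x = ψ x) (by simp) hG hGi hP hE hF
    (fun c x h => by simp [h]) (fun x y h h' => by simp [h, h'])
    (fun x y h h' => by simp [h, h']) x

/-! ### The structure maps -/

section structureMaps

variable {q : ℂ} (hq : q ≠ 0)

/-- The comultiplication. -/
def comulU : Unorm q →ₐ[ℂ] Unorm q ⊗[ℂ] Unorm q := liftU hq ((qdata hq).comul hq)

lemma counit_data : QData q (1 : ℂ) 1 1 0 0 := by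
  constructor <;> simp

/-- The counit. -/
def counitU : Unorm q →ₐ[ℂ] ℂ := liftU hq counit_data

/-- The antipode-like map `T`, as a homomorphism to the opposite algebra. -/
def antipOp : Unorm q →ₐ[ℂ] (Unorm q)ᵐᵒᵖ := liftU hq ((qdata hq).antip hq)

/-- The antihomomorphism `T` as a linear map. -/
def antipU : Unorm q →ₗ[ℂ] Unorm q :=
  (MulOpposite.opLinearEquiv ℂ).symm.toLinearMap ∘ₗ (antipOp hq).toLinearMap

end structureMaps

section lift2

variable {q : ℂ} {A : Type} [Ring A] [Algebra ℂ A] {g gi p e f : A}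
variable (hq : q ≠ 0) (h : QData q g gi p e f)

lemma liftU_G : liftU hq h (nG q) = g := by
  rw [nG, map_add, liftU_K, liftU_L, ← mul_add, add_sub_cancel, mul_one]
lemma liftU_Gi : liftU hq h (nGi q) = gi := by
  rw [nGi, map_add, liftU_Kb, liftU_Lb, ← mul_add, add_sub_cancel, mul_one]
lemma liftU_P : liftU hq h (nP q) = p := by
  rw [nP, map_mul, liftU_K, liftU_Kb, mul_assoc, ← mul_assoc p, h.pgi, mul_assoc, h.pp,
    ← mul_assoc, h.g_gi, one_mul]

end lift2

section values

variable {q : ℂ} (hq : q ≠ 0)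

lemma comul_G : comulU hq (nG q) = nG q ⊗ₜ nG q := liftU_G _ _
lemma comul_Gi : comulU hq (nGi q) = nGi q ⊗ₜ nGi q := liftU_Gi _ _
lemma comul_P : comulU hq (nP q) = nP q ⊗ₜ nP q := liftU_P _ _
lemma comul_E : comulU hq (nE q) = 1 ⊗ₜ nE q + nE q ⊗ₜ nG q := liftU_E _ _
lemma comul_F : comulU hq (nF q) = nF q ⊗ₜ 1 + nGi q ⊗ₜ nF q := liftU_F _ _
lemma comul_K : comulU hq (nK q) = nK q ⊗ₜ nK q := by
  rw [← G_P, map_mul, comul_G, comul_P, Algebra.TensorProduct.tmul_mul_tmul]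
lemma comul_Kb : comulU hq (nKb q) = nKb q ⊗ₜ nKb q := by
  rw [← Gi_P, map_mul, comul_Gi, comul_P, Algebra.TensorProduct.tmul_mul_tmul]
lemma comul_L : comulU hq (nL q) = nL q ⊗ₜ nL q + nL q ⊗ₜ nK q + nK q ⊗ₜ nL q := by
  have : nL q = nG q - nK q := by rw [nG]; abel
  rw [this, map_sub, comul_G, comul_K]
  simp only [TensorProduct.tmul_sub, TensorProduct.sub_tmul]
  abel
lemma comul_Lb :
    comulU hq (nLb q) = nLb q ⊗ₜ nLb q + nLb q ⊗ₜ nKb q + nKb q ⊗ₜ nLb q := by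
  have : nLb q = nGi q - nKb q := by rw [nGi]; abel
  rw [this, map_sub, comul_Gi, comul_Kb]
  simp only [TensorProduct.tmul_sub, TensorProduct.sub_tmul]
  abel

lemma counit_G : counitU hq (nG q) = 1 := liftU_G _ _
lemma counit_Gi : counitU hq (nGi q) = 1 := liftU_Gi _ _
lemma counit_P : counitU hq (nP q) = 1 := liftU_P _ _
lemma counit_E : counitU hq (nE q) = 0 := liftU_E _ _
lemma counit_F : counitU hq (nF q) = 0 := liftU_F _ _

lemma antip_mul (x y : Unorm q) : antipU hq (x * y) = antipU hq y * antipU hq x := by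
  simp [antipU]
lemma antip_one : antipU hq 1 = 1 := by simp [antipU]
lemma antip_G : antipU hq (nG q) = nGi q := by simp [antipU, antipOp, liftU_G]
lemma antip_Gi : antipU hq (nGi q) = nG q := by simp [antipU, antipOp, liftU_Gi]
lemma antip_P : antipU hq (nP q) = nP q := by simp [antipU, antipOp, liftU_P]
lemma antip_E : antipU hq (nE q) = -(nE q * nGi q) := by simp [antipU, antipOp, liftU_E]
lemma antip_F : antipU hq (nF q) = -(nG q * nF q) := by simp [antipU, antipOp, liftU_F]
lemma antip_K : antipU hq (nK q) = nKb q := by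
  rw [← G_P, antip_mul, antip_G, antip_P, (qdata hq).pgi, Gi_P]
lemma antip_Kb : antipU hq (nKb q) = nK q := by
  rw [← Gi_P, antip_mul, antip_Gi, antip_P, (qdata hq).pg, G_P]
lemma antip_L : antipU hq (nL q) = nLb q := by
  have h1 : nL q = nG q - nK q := by rw [nG]; abel
  rw [h1, map_sub, antip_G, antip_K, nGi]; abel
lemma antip_Lb : antipU hq (nLb q) = nL q := by
  have h1 : nLb q = nGi q - nKb q := by rw [nGi]; abel
  rw [h1, map_sub, antip_Gi, antip_Kb, nG]; abel

end values

/-! ### The bialgebra axioms -/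

section bialgebra

variable {q : ℂ} (hq : q ≠ 0)

lemma comul_coassoc : IsCoassoc (comulU hq) := by
  have key : ((Algebra.TensorProduct.assoc ℂ ℂ ℂ (Unorm q) (Unorm q) (Unorm q)).toAlgHom.comp
      (Algebra.TensorProduct.map (comulU hq) (AlgHom.id ℂ _))).comp (comulU hq) =
      (Algebra.TensorProduct.map (AlgHom.id ℂ _) (comulU hq)).comp (comulU hq) := by
    apply unorm_ext
    · simp [comul_G]
    · simp [comul_Gi]
    · simp [comul_P]
    · simp [comul_E, comul_G, TensorProduct.tmul_add, TensorProduct.add_tmul,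
        Algebra.TensorProduct.one_def, add_assoc]
    · simp [comul_F, comul_Gi, TensorProduct.tmul_add, TensorProduct.add_tmul,
        Algebra.TensorProduct.one_def, add_assoc]
  exact fun x => DFunLike.congr_fun key x

lemma counit_counit : IsCounit (comulU hq) (counitU hq) := by
  constructor
  · have key : ((Algebra.TensorProduct.lid ℂ (Unorm q)).toAlgHom.comp
        (Algebra.TensorProduct.map (counitU hq) (AlgHom.id ℂ _))).comp (comulU hq) =
        AlgHom.id ℂ _ := by
      apply unorm_ext <;>
      simp [comul_G, comul_Gi, comul_P, comul_E, comul_F, counit_G, counit_Gi, counit_P,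
        counit_E, counit_F]
    exact fun x => DFunLike.congr_fun key x
  · have key : ((Algebra.TensorProduct.rid ℂ ℂ (Unorm q)).toAlgHom.comp
        (Algebra.TensorProduct.map (AlgHom.id ℂ _) (counitU hq))).comp (comulU hq) =
        AlgHom.id ℂ _ := by
      apply unorm_ext <;>
      simp [comul_G, comul_Gi, comul_P, comul_E, comul_F, counit_G, counit_Gi, counit_P,
        counit_E, counit_F]
    exact fun x => DFunLike.congr_fun key x

end bialgebra

/-! ### Convolution and multiplicativity -/

section convolution

variable {V : Type} [Ring V] [Algebra ℂ V] (Δ : V →ₐ[ℂ] V ⊗[ℂ] V) {A B : V →ₗ[ℂ] V}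

lemma conv_apply (x : V) :
    conv Δ A B x = LinearMap.mul' ℂ V (TensorProduct.map A B (Δ x)) := rfl

/-- With `A` multiplicative and `B` antimultiplicative, `(A ⋆ B)(xy) = A(x₁) (A ⋆ B)(y) B(x₂)`,
so centrality of the middle factor gives multiplicativity. -/
lemma conv_mul_of_right (hA : ∀ x y, A (x * y) = A x * A y) (hB : ∀ x y, B (x * y) = B y * B x)
    (x y : V) (hy : ∀ z, Commute (conv Δ A B y) z) :
    conv Δ A B (x * y) = conv Δ A B x * conv Δ A B y := by
  have key : ∀ s t : V ⊗[ℂ] V,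
      (∀ z, Commute (LinearMap.mul' ℂ V (TensorProduct.map A B t)) z) →
      LinearMap.mul' ℂ V (TensorProduct.map A B (s * t)) =
        LinearMap.mul' ℂ V (TensorProduct.map A B s) *
          LinearMap.mul' ℂ V (TensorProduct.map A B t) := by
    intro s t ht
    induction s with
    | zero => simp
    | add s s' h h' => simp only [add_mul, map_add, h, h']
    | tmul a b =>
      have : LinearMap.mul' ℂ V (TensorProduct.map A B (a ⊗ₜ b * t)) =
          A a * LinearMap.mul' ℂ V (TensorProduct.map A B t) * B b := by
        clear ht
        induction t with
        | zero => simp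
        | add s s' h h' => simp only [mul_add, add_mul, map_add, h, h']
        | tmul c d => simp [hA, hB, mul_assoc]
      rw [this, mul_assoc, (ht _).eq]
      simp [mul_assoc]
  rw [conv_apply, map_mul]
  exact key _ _ hy

/-- With `A` antimultiplicative and `B` multiplicative, `(A ⋆ B)(xy) = A(y₁) (A ⋆ B)(x) B(y₂)`. -/
lemma conv_mul_of_left (hA : ∀ x y, A (x * y) = A y * A x) (hB : ∀ x y, B (x * y) = B x * B y)
    (x y : V) (hx : ∀ z, Commute (conv Δ A B x) z) :
    conv Δ A B (x * y) = conv Δ A B x * conv Δ A B y := by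
  have key : ∀ s t : V ⊗[ℂ] V,
      (∀ z, Commute (LinearMap.mul' ℂ V (TensorProduct.map A B s)) z) →
      LinearMap.mul' ℂ V (TensorProduct.map A B (s * t)) =
        LinearMap.mul' ℂ V (TensorProduct.map A B s) *
          LinearMap.mul' ℂ V (TensorProduct.map A B t) := by
    intro s t hs
    induction t with
    | zero => simp
    | add t t' h h' => simp only [mul_add, map_add, h, h']
    | tmul a b =>
      have : LinearMap.mul' ℂ V (TensorProduct.map A B (s * a ⊗ₜ b)) =
          A a * LinearMap.mul' ℂ V (TensorProduct.map A B s) * B b := by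
        clear hs
        induction s with
        | zero => simp
        | add s s' h h' => simp only [mul_add, add_mul, map_add, h, h']
        | tmul c d => simp [hA, hB, mul_assoc]
      rw [this, ← (hs _).eq]
      simp [mul_assoc]
  rw [conv_apply, map_mul]
  exact key _ _ hx

lemma conv_mul_of_central (hA : ∀ x y, A (x * y) = A x * A y)
    (hB : ∀ x y, B (x * y) = B x * B y) (hc : ∀ x z, Commute (A x) z) (x y : V) :
    conv Δ A B (x * y) = conv Δ A B x * conv Δ A B y := by
  rw [conv_apply, conv_apply, conv_apply, map_mul]
  induction Δ x with
  | zero => simp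
  | add s s' h h' => simp only [add_mul, map_add, h, h']
  | tmul a b =>
    induction Δ y with
    | zero => simp
    | add s s' h h' => simp only [mul_add, map_add, h, h']
    | tmul c d =>
      simp only [Algebra.TensorProduct.tmul_mul_tmul, TensorProduct.map_tmul,
        LinearMap.mul'_apply, hA, hB]
      exact (hc c (B b)).mul_mul_mul_comm _ _

lemma conv_antimul_of_central (hA : ∀ x y, A (x * y) = A x * A y)
    (hB : ∀ x y, B (x * y) = B y * B x) (hc : ∀ x z, Commute (A x) z) (x y : V) :
    conv Δ A B (x * y) = conv Δ A B y * conv Δ A B x := by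
  rw [conv_apply, conv_apply, conv_apply, map_mul]
  induction Δ x with
  | zero => simp
  | add s s' h h' => simp only [mul_add, add_mul, map_add, h, h']
  | tmul a b =>
    induction Δ y with
    | zero => simp
    | add s s' h h' => simp only [mul_add, add_mul, map_add, h, h']
    | tmul c d =>
      simp only [Algebra.TensorProduct.tmul_mul_tmul, TensorProduct.map_tmul,
        LinearMap.mul'_apply, hA, hB]
      rw [(hc a (A c)).eq]
      exact (hc a (B d)).mul_mul_mul_comm _ _

end convolution

/-! ### Von Neumann regularity -/

section regular

variable {q : ℂ} (hq : q ≠ 0)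

/-- `id ⋆ T`, the endomorphism with `K + L ↦ 1`, `P ↦ P`, `E, F ↦ 0`. -/
def locUnit : Unorm q →ₗ[ℂ] Unorm q := conv (comulU hq) LinearMap.id (antipU hq)

lemma locUnit_one : locUnit hq 1 = 1 := by
  simp [locUnit, conv_apply, Algebra.TensorProduct.one_def, antip_one]
lemma locUnit_G : locUnit hq (nG q) = 1 := by
  simp [locUnit, conv_apply, comul_G, antip_G, (qdata hq).g_gi]
lemma locUnit_Gi : locUnit hq (nGi q) = 1 := by
  simp [locUnit, conv_apply, comul_Gi, antip_Gi, (qdata hq).gi_g]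
lemma locUnit_P : locUnit hq (nP q) = nP q := by
  simp [locUnit, conv_apply, comul_P, antip_P, (qdata hq).pp]
lemma locUnit_E : locUnit hq (nE q) = 0 := by
  simp [locUnit, conv_apply, comul_E, antip_E, antip_G]
lemma locUnit_F : locUnit hq (nF q) = 0 := by
  simp [locUnit, conv_apply, comul_F, antip_F, antip_one, (qdata hq).add_gi_neg]

lemma P_central {q : ℂ} (hq : q ≠ 0) (z : Unorm q) : Commute (nP q) z := by
  have h := qdata hq
  exact unorm_induct (C := fun z => Commute (nP q) z) (Commute.one_right _) h.pg h.pgi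
    (Commute.refl _) h.pe h.pf (fun c x hx => hx.smul_right c) (fun x y hx hy => hx.add_right hy)
    (fun x y hx hy => hx.mul_right hy) z

lemma locUnit_mul_aux (x y : Unorm q) (hy : ∀ z, Commute (locUnit hq y) z) :
    locUnit hq (x * y) = locUnit hq x * locUnit hq y :=
  conv_mul_of_right _ (fun _ _ => rfl) (antip_mul hq) x y hy

lemma locUnit_central (x z : Unorm q) : Commute (locUnit hq x) z := by
  revert z
  refine unorm_induct (C := fun x => ∀ z, Commute (locUnit hq x) z) ?_ ?_ ?_ ?_ ?_ ?_ ?_ ?_ ?_ x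
  · simp [locUnit_one]
  · simp [locUnit_G]
  · simp [locUnit_Gi]
  · simpa [locUnit_P] using P_central hq
  · simp [locUnit_E]
  · simp [locUnit_F]
  · intro c x h z
    rw [map_smul]; exact (h z).smul_left c
  · intro x y h h' z
    rw [map_add]; exact (h z).add_left (h' z)
  · intro x y h h' z
    rw [locUnit_mul_aux hq x y h']; exact (h z).mul_left (h' z)

lemma locUnit_mul (x y : Unorm q) : locUnit hq (x * y) = locUnit hq x * locUnit hq y :=
  locUnit_mul_aux hq x y (locUnit_central hq y)

/-- `T ⋆ id = id ⋆ T`. -/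
lemma conv_antip_id : conv (comulU hq) (antipU hq) LinearMap.id = locUnit hq := by
  have h := qdata hq
  ext x
  refine unorm_induct
    (C := fun x => conv (comulU hq) (antipU hq) LinearMap.id x = locUnit hq x)
    ?_ ?_ ?_ ?_ ?_ ?_ ?_ ?_ ?_ x
  · simp [locUnit_one, conv_apply, Algebra.TensorProduct.one_def, antip_one]
  · simp [locUnit_G, conv_apply, comul_G, antip_G, h.gi_g]
  · simp [locUnit_Gi, conv_apply, comul_Gi, antip_Gi, h.g_gi]
  · simp [locUnit_P, conv_apply, comul_P, antip_P, h.pp]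
  · simp [locUnit_E, conv_apply, comul_E, antip_E, antip_one, h.add_neg_g]
  · simp [locUnit_F, conv_apply, comul_F, antip_F, antip_Gi]
  · intro c x h
    rw [map_smul, map_smul, h]
  · intro x y h h'
    rw [map_add, map_add, h, h']
  · intro x y h h'
    rw [conv_mul_of_left _ (antip_mul hq) (fun _ _ => rfl), h, h', locUnit_mul]
    rw [h]; exact locUnit_central hq x

lemma conv_locUnit_id : conv (comulU hq) (locUnit hq) LinearMap.id = LinearMap.id := by
  have h := qdata hq
  ext x
  refine unorm_induct
    (C := fun x => conv (comulU hq) (locUnit hq) LinearMap.id x = LinearMap.id x)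
    ?_ ?_ ?_ ?_ ?_ ?_ ?_ ?_ ?_ x
  · simp [locUnit_one, conv_apply, Algebra.TensorProduct.one_def]
  · simp [locUnit_G, conv_apply, comul_G]
  · simp [locUnit_Gi, conv_apply, comul_Gi]
  · simp [locUnit_P, conv_apply, comul_P, h.pp]
  · simp [locUnit_E, conv_apply, comul_E, locUnit_one]
  · simp [locUnit_F, conv_apply, comul_F, locUnit_Gi]
  · intro c x h
    rw [map_smul, map_smul, h]
  · intro x y h h'
    rw [map_add, map_add, h, h']
  · intro x y h h'
    rw [conv_mul_of_central _ (locUnit_mul hq) (fun _ _ => rfl) (locUnit_central hq), h, h']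
    rfl

lemma conv_locUnit_antip : conv (comulU hq) (locUnit hq) (antipU hq) = antipU hq := by
  have h := qdata hq
  ext x
  refine unorm_induct
    (C := fun x => conv (comulU hq) (locUnit hq) (antipU hq) x = antipU hq x)
    ?_ ?_ ?_ ?_ ?_ ?_ ?_ ?_ ?_ x
  · simp [locUnit_one, conv_apply, Algebra.TensorProduct.one_def]
  · simp [locUnit_G, conv_apply, comul_G]
  · simp [locUnit_Gi, conv_apply, comul_Gi]
  · simp [locUnit_P, conv_apply, comul_P, antip_P, h.pp]
  · simp [locUnit_E, conv_apply, comul_E, locUnit_one]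
  · simp [locUnit_F, conv_apply, comul_F, locUnit_Gi]
  · intro c x h
    rw [map_smul, map_smul, h]
  · intro x y h h'
    rw [map_add, map_add, h, h']
  · intro x y h h'
    rw [conv_antimul_of_central _ (locUnit_mul hq) (antip_mul hq) (locUnit_central hq), h, h',
      antip_mul]

end regular

/-- `U_{K,L,norm}` carries a bialgebra structure with the indicated
comultiplication and counit, and an algebra antihomomorphism `T` with the
indicated values which is a von Neumann regular antipode for convolution:
`id ⋆ T ⋆ id = id` and `T ⋆ id ⋆ T = T`. -/
theorem statement14 (q : ℂ) (hq0 : q ≠ 0) (hq1 : q ≠ 1) (hqm1 : q ≠ -1) :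
    ∃ Δ : Unorm q →ₐ[ℂ] Unorm q ⊗[ℂ] Unorm q, ∃ ε : Unorm q →ₐ[ℂ] ℂ,
      IsCoassoc Δ ∧ IsCounit Δ ε ∧
      Δ (nK q) = nK q ⊗ₜ[ℂ] nK q ∧
      Δ (nKb q) = nKb q ⊗ₜ[ℂ] nKb q ∧
      Δ (nL q) = nL q ⊗ₜ[ℂ] nL q + nL q ⊗ₜ[ℂ] nK q + nK q ⊗ₜ[ℂ] nL q ∧
      Δ (nLb q) = nLb q ⊗ₜ[ℂ] nLb q + nLb q ⊗ₜ[ℂ] nKb q + nKb q ⊗ₜ[ℂ] nLb q ∧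
      Δ (nE q) = 1 ⊗ₜ[ℂ] nE q + nE q ⊗ₜ[ℂ] (nK q + nL q) ∧
      Δ (nF q) = nF q ⊗ₜ[ℂ] 1 + (nKb q + nLb q) ⊗ₜ[ℂ] nF q ∧
      ε (nK q) = 1 ∧ ε (nKb q) = 1 ∧ ε (nL q) = 0 ∧ ε (nLb q) = 0 ∧
      ε (nE q) = 0 ∧ ε (nF q) = 0 ∧
      ∃ T : Unorm q →ₗ[ℂ] Unorm q,
        (∀ x y : Unorm q, T (x * y) = T y * T x) ∧ T 1 = 1 ∧
        T (nK q) = nKb q ∧ T (nKb q) = nK q ∧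
        T (nL q) = nLb q ∧ T (nLb q) = nL q ∧
        T (nE q) = -(nE q * (nKb q + nLb q)) ∧
        T (nF q) = -((nK q + nL q) * nF q) ∧
        conv Δ (conv Δ LinearMap.id T) LinearMap.id = LinearMap.id ∧
        conv Δ (conv Δ T LinearMap.id) T = T := by
  exact ⟨comulU hq0, counitU hq0, comul_coassoc hq0, counit_counit hq0, comul_K hq0, comul_Kb hq0,
    comul_L hq0, comul_Lb hq0, comul_E hq0, comul_F hq0,
    by simp [counitU, liftU_K], by simp [counitU, liftU_Kb], by simp [counitU, liftU_L],
    by simp [counitU, liftU_Lb], counit_E hq0, counit_F hq0,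
    antipU hq0, antip_mul hq0, antip_one hq0, antip_K hq0, antip_Kb hq0, antip_L hq0, antip_Lb hq0,
    antip_E hq0, antip_F hq0, conv_locUnit_id hq0,
    by rw [conv_antip_id, conv_locUnit_antip]⟩
end
end

section
/- There exists a Hopf algebra structure (Δ, ε, S) on U_{K,L,twist} (compatible with its algebra structure) satisfying Δ(K) = K ⊗ K + L ⊗ L, Δ(K̄) = K̄ ⊗ K̄ + L̄ ⊗ L̄, Δ(L) = L ⊗ K + K ⊗ L, Δ(L̄) = L̄ ⊗ K̄ + K̄ ⊗ L̄, Δ(E) = 1 ⊗ E + E ⊗ (K + L), Δ(F) = F ⊗ 1 + (K̄ + L̄) ⊗ F, ε(K) = ε(K̄) = 1, ε(L) = ε(L̄) = ε(E) = ε(F) = 0, where the antipode S is the algebra antihomomorphism with S(K) = K̄, S(K̄) = K, S(L) = L̄, S(L̄) = L, S(E) = −E(K̄ + L̄), S(F) = −(K + L)F, and S satisfies μ ∘ (S ⊗ id) ∘ Δ = η ∘ ε = μ ∘ (id ⊗ S) ∘ Δ, i.e. (S ⋆ id)(X) = (id ⋆ S)(X) = ε(X)·1 for all X ∈ U_{K,L,twist}.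 -/
/-!
With `g = K + L`, `g' = K̄ + L̄` and `p = K K̄`, the defining relations say exactly that `g` is
invertible with inverse `g'`, that `p` is an idempotent commuting with `g` and satisfying
`p E = E (1 - p)`, `p F = F (1 - p)`, and that `E`, `F`, `g` satisfy the usual quantum `sl₂`
relations; the old generators are recovered as `K = p g`, `L = (1 - p) g`, `K̄ = p g'`,
`L̄ = (1 - p) g'`. This second presentation is the structure `TwistData`, and `TwistData.lift` is
its universal property. In these terms the Hopf structure is transparent: `g` is group-like,
`Δ p = p ⊗ p + (1 - p) ⊗ (1 - p)`, and `E`, `F` are skew-primitive. Thus `Δ`, `ε` and `S` are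
obtained by exhibiting twist data in `U ⊗ U`, in `ℂ` and in the opposite algebra of `U`.

Coassociativity and the counit axioms are equalities of algebra homomorphisms, checked on
generators. The two antipode identities are not, but the set of elements where they hold is closed
under products because `S` is anti-multiplicative (`conv_left_mul`, `conv_right_mul`), so they too
reduce to generators.
-/

noncomputable section

/-- Relations of `U_{K,L,twist}`. -/
inductive relTwist (q : ℂ) : FA6 → FA6 → Prop
  | kkk : relTwist q (XK * XKb * XK) XK
  | kbk : relTwist q (XKb * XK * XKb) XKb
  | kc : relTwist q (XK * XKb) (XKb * XK)
  | lll : relTwist q (XL * XLb * XL) XL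
  | lbl : relTwist q (XLb * XL * XLb) XLb
  | lc : relTwist q (XL * XLb) (XLb * XL)
  | pq : relTwist q (XK * XKb + XL * XLb) 1
  | ke : relTwist q (XK * XE) (q ^ 2 • (XE * XL))
  | le : relTwist q (XL * XE) (q ^ 2 • (XE * XK))
  | kbe : relTwist q (XKb * XE) ((q ^ 2)⁻¹ • (XE * XLb))
  | lbe : relTwist q (XLb * XE) ((q ^ 2)⁻¹ • (XE * XKb))
  | kf : relTwist q (XK * XF) ((q ^ 2)⁻¹ • (XF * XL))
  | lf : relTwist q (XL * XF) ((q ^ 2)⁻¹ • (XF * XK))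
  | kbf : relTwist q (XKb * XF) (q ^ 2 • (XF * XLb))
  | lbf : relTwist q (XLb * XF) (q ^ 2 • (XF * XKb))
  | ef : relTwist q (XE * XF - XF * XE)
      ((q - q⁻¹)⁻¹ • ((XK + XL) - (XKb + XLb)))

/-- The algebra `U_{K,L,twist}`. -/
abbrev Utwist (q : ℂ) : Type := RingQuot (relTwist q)

def tK (q : ℂ) : Utwist q := RingQuot.mkAlgHom ℂ (relTwist q) XK
def tKb (q : ℂ) : Utwist q := RingQuot.mkAlgHom ℂ (relTwist q) XKb
def tL (q : ℂ) : Utwist q := RingQuot.mkAlgHom ℂ (relTwist q) XL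
def tLb (q : ℂ) : Utwist q := RingQuot.mkAlgHom ℂ (relTwist q) XLb
def tE (q : ℂ) : Utwist q := RingQuot.mkAlgHom ℂ (relTwist q) XE
def tF (q : ℂ) : Utwist q := RingQuot.mkAlgHom ℂ (relTwist q) XF
def tP (q : ℂ) : Utwist q := tK q * tKb q
def tQ (q : ℂ) : Utwist q := tL q * tLb q

open scoped TensorProduct

variable {U : Type} [Ring U] [Algebra ℂ U]

/-! ### The presentation by an invertible element and an idempotent -/

/-- Elements of an algebra satisfying the relations of `U_{K,L,twist}` in terms of
`g = K + L`, `g' = K̄ + L̄`, `p = K K̄`, `e = E`, `f = F`. -/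
structure TwistData (q : ℂ) (A : Type) [Ring A] [Algebra ℂ A] where
  p : A
  g : A
  g' : A
  e : A
  f : A
  gg' : g * g' = 1
  g'g : g' * g = 1
  pp : p * p = p
  pg : p * g = g * p
  pe : p * e = e - e * p
  pf : p * f = f - f * p
  ge : g * e = q ^ 2 • (e * g)
  gf : g * f = (q ^ 2)⁻¹ • (f * g)
  ef : e * f - f * e = (q - q⁻¹)⁻¹ • (g - g')

namespace TwistData

variable {q : ℂ} {A : Type} [Ring A] [Algebra ℂ A] (D : TwistData q A)

/-- Conjugating a `c`-commutation relation of an invertible `g` gives the `c⁻¹`-commutation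
relation of its inverse. -/
lemma inv_comm {g g' e : A} {c : ℂ} (hc : c ≠ 0) (h1 : g * g' = 1) (h2 : g' * g = 1)
    (h : g * e = c • (e * g)) : g' * e = c⁻¹ • (e * g') := by
  have : e * g' = c • (g' * e) := by
    calc e * g' = g' * (g * e) * g' := by rw [← mul_assoc g', h2, one_mul]
      _ = c • (g' * e * (g * g')) := by rw [h]; simp [mul_assoc]
      _ = _ := by rw [h1, mul_one]
  rw [this, smul_smul, inv_mul_cancel₀ hc, one_smul]

lemma pg' : D.p * D.g' = D.g' * D.p := by
  calc D.p * D.g' = D.g' * (D.g * D.p) * D.g' := by rw [← mul_assoc D.g', D.g'g, one_mul]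
    _ = D.g' * D.p * (D.g * D.g') := by rw [← D.pg]; simp only [mul_assoc]
    _ = _ := by rw [D.gg', mul_one]

/-- The images of the six generators determined by twist data. -/
def val : G6 → A
  | .K => D.p * D.g
  | .Kb => D.p * D.g'
  | .L => (1 - D.p) * D.g
  | .Lb => (1 - D.p) * D.g'
  | .E => D.e
  | .F => D.f

lemma block {R : Type} [Ring R] (p x y : R) (hp : p * p = p) (hx : p * x = x * p) :
    p * x * (p * y) = p * (x * y) := by
  rw [hx, mul_assoc, ← mul_assoc p p y, hp, ← mul_assoc, ← hx, mul_assoc]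

/-- If `x` `c`-commutes with `e` and `e` exchanges `p` with `1 - p`, then `e` exchanges the corners
`p x` and `(1 - p) x`, up to the scalar `c`. -/
lemma block_comm (p x e : A) (c : ℂ) (he : p * e = e - e * p)
    (h : x * e = c • (e * x)) :
    p * x * e = c • (e * ((1 - p) * x)) ∧ (1 - p) * x * e = c • (e * (p * x)) := by
  have h1 : p * x * e = c • (e * ((1 - p) * x)) := by
    rw [mul_assoc, h, mul_smul_comm, ← mul_assoc, he]
    congr 1
    noncomm_ring
  refine ⟨h1, ?_⟩
  have : (1 - p) * x * e = x * e - p * x * e := by noncomm_ring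
  rw [this, h1, h, ← smul_sub]
  congr 1
  noncomm_ring

/-- The universal property of `U_{K,L,twist}` in terms of twist data. -/
def lift (hq : q ≠ 0) : Utwist q →ₐ[ℂ] A :=
  RingQuot.liftAlgHom ℂ ⟨FreeAlgebra.lift ℂ D.val, by
    have hq2 : q ^ 2 ≠ 0 := pow_ne_zero 2 hq
    have hnp : (1 - D.p) * (1 - D.p) = 1 - D.p := by
      have := D.pp
      simp [mul_sub, sub_mul, this]
    have hg := D.pg
    have hg' := D.pg'
    have hng : (1 - D.p) * D.g = D.g * (1 - D.p) := by simp [mul_sub, sub_mul, hg]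
    have hng' : (1 - D.p) * D.g' = D.g' * (1 - D.p) := by simp [mul_sub, sub_mul, hg']
    have ge' := inv_comm hq2 D.gg' D.g'g D.ge
    have gf' := inv_comm (inv_ne_zero hq2) D.gg' D.g'g D.gf
    rw [inv_inv] at gf'
    have E1 := block_comm _ _ _ _ D.pe D.ge
    have E2 := block_comm _ _ _ _ D.pe ge'
    have F1 := block_comm _ _ _ _ D.pf D.gf
    have F2 := block_comm _ _ _ _ D.pf gf'
    have b1 := block D.p D.g D.g' D.pp hg
    have b2 := block D.p D.g' D.g D.pp hg'
    have b3 := block (1 - D.p) D.g D.g' hnp hng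
    have b4 := block (1 - D.p) D.g' D.g hnp hng'
    rw [D.gg', mul_one] at b1 b3
    rw [D.g'g, mul_one] at b2 b4
    rintro _ _ (_ | _) <;>
      simp only [XK, XKb, XL, XLb, XE, XF, map_mul, map_add, map_sub, map_one, map_smul,
        FreeAlgebra.lift_ι_apply, val]
    · rw [b1, ← mul_assoc, D.pp]
    · rw [b2, ← mul_assoc, D.pp]
    · rw [b1, b2]
    · rw [b3, ← mul_assoc, hnp]
    · rw [b4, ← mul_assoc, hnp]
    · rw [b3, b4]
    · rw [b1, b3, add_sub_cancel]
    · exact E1.1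
    · exact E1.2
    · exact E2.1
    · exact E2.2
    · exact F1.1
    · exact F1.2
    · exact F2.1
    · exact F2.2
    · rw [D.ef]
      congr 1
      noncomm_ring⟩

variable (hq : q ≠ 0)

lemma lift_K : D.lift hq (tK q) = D.p * D.g := by simp [lift, tK, XK, val]
lemma lift_Kb : D.lift hq (tKb q) = D.p * D.g' := by simp [lift, tKb, XKb, val]
lemma lift_L : D.lift hq (tL q) = (1 - D.p) * D.g := by simp [lift, tL, XL, val]
lemma lift_Lb : D.lift hq (tLb q) = (1 - D.p) * D.g' := by simp [lift, tLb, XLb, val]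
lemma lift_E : D.lift hq (tE q) = D.e := by simp [lift, tE, XE, val]
lemma lift_F : D.lift hq (tF q) = D.f := by simp [lift, tF, XF, val]

end TwistData

/-! ### Twist data in the algebra itself -/

section Relations

variable (q : ℂ)

lemma t_kkk : tK q * tKb q * tK q = tK q := by
  simpa [tK, tKb] using RingQuot.mkAlgHom_rel ℂ (relTwist.kkk (q := q))
lemma t_kbk : tKb q * tK q * tKb q = tKb q := by
  simpa [tK, tKb] using RingQuot.mkAlgHom_rel ℂ (relTwist.kbk (q := q))
lemma t_kc : tK q * tKb q = tKb q * tK q := by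
  simpa [tK, tKb] using RingQuot.mkAlgHom_rel ℂ (relTwist.kc (q := q))
lemma t_lll : tL q * tLb q * tL q = tL q := by
  simpa [tL, tLb] using RingQuot.mkAlgHom_rel ℂ (relTwist.lll (q := q))
lemma t_lbl : tLb q * tL q * tLb q = tLb q := by
  simpa [tL, tLb] using RingQuot.mkAlgHom_rel ℂ (relTwist.lbl (q := q))
lemma t_lc : tL q * tLb q = tLb q * tL q := by
  simpa [tL, tLb] using RingQuot.mkAlgHom_rel ℂ (relTwist.lc (q := q))
lemma t_pq : tK q * tKb q + tL q * tLb q = 1 := by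
  simpa [tK, tKb, tL, tLb] using RingQuot.mkAlgHom_rel ℂ (relTwist.pq (q := q))
lemma t_ke : tK q * tE q = q ^ 2 • (tE q * tL q) := by
  simpa only [tK, tKb, tL, tLb, tE, tF, map_mul, map_smul] using
    RingQuot.mkAlgHom_rel ℂ (relTwist.ke (q := q))
lemma t_le : tL q * tE q = q ^ 2 • (tE q * tK q) := by
  simpa only [tK, tKb, tL, tLb, tE, tF, map_mul, map_smul] using
    RingQuot.mkAlgHom_rel ℂ (relTwist.le (q := q))
lemma t_kbe : tKb q * tE q = (q ^ 2)⁻¹ • (tE q * tLb q) := by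
  simpa only [tK, tKb, tL, tLb, tE, tF, map_mul, map_smul] using
    RingQuot.mkAlgHom_rel ℂ (relTwist.kbe (q := q))
lemma t_kf : tK q * tF q = (q ^ 2)⁻¹ • (tF q * tL q) := by
  simpa only [tK, tKb, tL, tLb, tE, tF, map_mul, map_smul] using
    RingQuot.mkAlgHom_rel ℂ (relTwist.kf (q := q))
lemma t_lf : tL q * tF q = (q ^ 2)⁻¹ • (tF q * tK q) := by
  simpa only [tK, tKb, tL, tLb, tE, tF, map_mul, map_smul] using
    RingQuot.mkAlgHom_rel ℂ (relTwist.lf (q := q))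
lemma t_kbf : tKb q * tF q = q ^ 2 • (tF q * tLb q) := by
  simpa only [tK, tKb, tL, tLb, tE, tF, map_mul, map_smul] using
    RingQuot.mkAlgHom_rel ℂ (relTwist.kbf (q := q))
lemma t_ef : tE q * tF q - tF q * tE q
    = (q - q⁻¹)⁻¹ • ((tK q + tL q) - (tKb q + tLb q)) := by
  simpa only [tK, tKb, tL, tLb, tE, tF, map_mul, map_smul, map_sub, map_add] using
    RingQuot.mkAlgHom_rel ℂ (relTwist.ef (q := q))

/-- For complementary idempotents `P` and `Q`, elements `x` supported on `P` and `y` supported on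
`Q` multiply to zero; below, `P = K K̄` and `Q = L L̄`. -/
lemma corner_zero {R : Type} [Ring R] {P Q x y : R} (hP : P * P = P) (hPQ : P + Q = 1)
    (hx : x * P = x) (hy : Q * y = y) : x * y = 0 := by
  obtain rfl : Q = 1 - P := eq_sub_of_add_eq' hPQ
  rw [← hx, ← hy, mul_assoc, ← mul_assoc P, mul_sub, hP]
  simp

lemma t_PP : tK q * tKb q * (tK q * tKb q) = tK q * tKb q := by
  rw [← mul_assoc, t_kkk]

lemma t_QQ : tL q * tLb q * (tL q * tLb q) = tL q * tLb q := by
  rw [← mul_assoc, t_lll]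

lemma t_QP : tL q * tLb q + tK q * tKb q = 1 := by rw [add_comm, t_pq]

lemma t_K_P : tK q * (tK q * tKb q) = tK q := by rw [t_kc, ← mul_assoc, t_kkk]
lemma t_L_Q : tL q * (tL q * tLb q) = tL q := by rw [t_lc, ← mul_assoc, t_lll]
lemma t_Kb_P : tKb q * (tK q * tKb q) = tKb q := by rw [← mul_assoc, t_kbk]
lemma t_Lb_Q : tLb q * (tL q * tLb q) = tLb q := by rw [← mul_assoc, t_lbl]
lemma t_P_Kb : tK q * tKb q * tKb q = tKb q := by rw [t_kc, t_kbk]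
lemma t_Q_Lb : tL q * tLb q * tLb q = tLb q := by rw [t_lc, t_lbl]

lemma t_KLb : tK q * tLb q = 0 := corner_zero (t_PP q) (t_pq q) (t_K_P q) (t_Q_Lb q)
lemma t_LKb : tL q * tKb q = 0 := corner_zero (t_QQ q) (t_QP q) (t_L_Q q) (t_P_Kb q)
lemma t_KL : tK q * tL q = 0 := corner_zero (t_PP q) (t_pq q) (t_K_P q) (t_lll q)
lemma t_LK : tL q * tK q = 0 := corner_zero (t_QQ q) (t_QP q) (t_L_Q q) (t_kkk q)
lemma t_KbL : tKb q * tL q = 0 := corner_zero (t_PP q) (t_pq q) (t_Kb_P q) (t_lll q)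
lemma t_LbK : tLb q * tK q = 0 := corner_zero (t_QQ q) (t_QP q) (t_Lb_Q q) (t_kkk q)
lemma t_KbLb : tKb q * tLb q = 0 := corner_zero (t_PP q) (t_pq q) (t_Kb_P q) (t_Q_Lb q)

/-- The tautological twist data in `U_{K,L,twist}`. -/
def univData (hq : q ≠ 0) : TwistData q (Utwist q) where
  p := tK q * tKb q
  g := tK q + tL q
  g' := tKb q + tLb q
  e := tE q
  f := tF q
  gg' := by simp [mul_add, add_mul, t_KLb, t_LKb, t_pq]
  g'g := by simp [mul_add, add_mul, t_KbL, t_LbK, ← t_kc, ← t_lc, t_pq]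
  pp := t_PP q
  pg := by
    rw [mul_add, add_mul, t_kkk, t_K_P, mul_assoc, t_KbL, ← mul_assoc, t_LK]
    simp
  pe := by
    have h : tL q * tLb q = 1 - tK q * tKb q := eq_sub_of_add_eq' (t_pq q)
    rw [mul_assoc, t_kbe, mul_smul_comm, ← mul_assoc, t_ke, smul_mul_assoc, smul_smul,
      inv_mul_cancel₀ (pow_ne_zero 2 hq), one_smul, mul_assoc, h, mul_sub, mul_one]
  pf := by
    have h : tL q * tLb q = 1 - tK q * tKb q := eq_sub_of_add_eq' (t_pq q)
    rw [mul_assoc, t_kbf, mul_smul_comm, ← mul_assoc, t_kf, smul_mul_assoc, smul_smul,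
      mul_inv_cancel₀ (pow_ne_zero 2 hq), one_smul, mul_assoc, h, mul_sub, mul_one]
  ge := by rw [add_mul, t_ke, t_le, mul_add, smul_add, add_comm]
  gf := by rw [add_mul, t_kf, t_lf, mul_add, smul_add, add_comm]
  ef := t_ef q

variable (hq : q ≠ 0)

lemma univ_K : (univData q hq).p * (univData q hq).g = tK q := by
  simp only [univData]
  rw [mul_add, t_kkk, mul_assoc, t_KbL, mul_zero, add_zero]
lemma univ_Kb : (univData q hq).p * (univData q hq).g' = tKb q := by
  simp only [univData]
  rw [mul_add, t_P_Kb, mul_assoc, t_KbLb, mul_zero, add_zero]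
lemma univ_L : (1 - (univData q hq).p) * (univData q hq).g = tL q := by
  rw [sub_mul, one_mul, univ_K]
  simp [univData]
lemma univ_Lb : (1 - (univData q hq).p) * (univData q hq).g' = tLb q := by
  rw [sub_mul, one_mul, univ_Kb]
  simp [univData]

end Relations

/-! ### Twist data for the comultiplication, the counit and the antipode -/

namespace TwistData

variable {q : ℂ} {A : Type} [Ring A] [Algebra ℂ A]

/-- Twist data in `A ⊗ A`: `g` is group-like, `e` and `f` are skew-primitive, and
`p ↦ p ⊗ p + (1 - p) ⊗ (1 - p)`. -/
def comul (D : TwistData q A) (hq : q ≠ 0) : TwistData q (A ⊗[ℂ] A) where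
  p := D.p ⊗ₜ D.p + (1 - D.p) ⊗ₜ (1 - D.p)
  g := D.g ⊗ₜ D.g
  g' := D.g' ⊗ₜ D.g'
  e := 1 ⊗ₜ D.e + D.e ⊗ₜ D.g
  f := D.f ⊗ₜ 1 + D.g' ⊗ₜ D.f
  gg' := by simp [D.gg', Algebra.TensorProduct.one_def]
  g'g := by simp [D.g'g, Algebra.TensorProduct.one_def]
  pp := by simp [mul_add, add_mul, mul_sub, sub_mul, D.pp]
  pg := by simp [mul_add, add_mul, mul_sub, sub_mul, D.pg]
  pe := by
    simp only [mul_add, add_mul, mul_sub, sub_mul, Algebra.TensorProduct.tmul_mul_tmul,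
      TensorProduct.tmul_sub, TensorProduct.sub_tmul, D.pe, D.pg, one_mul, mul_one]
    abel
  pf := by
    simp only [mul_add, add_mul, mul_sub, sub_mul, Algebra.TensorProduct.tmul_mul_tmul,
      TensorProduct.tmul_sub, TensorProduct.sub_tmul, D.pf, D.pg', one_mul, mul_one]
    abel
  ge := by
    simp only [mul_add, add_mul, Algebra.TensorProduct.tmul_mul_tmul, D.ge, one_mul, mul_one,
      TensorProduct.tmul_smul, TensorProduct.smul_tmul', smul_add]
  gf := by
    simp only [mul_add, add_mul, Algebra.TensorProduct.tmul_mul_tmul, D.gf, one_mul, mul_one,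
      TensorProduct.tmul_smul, TensorProduct.smul_tmul', smul_add, D.gg', D.g'g]
  ef := by
    -- The cross terms cancel: `g f` and `g' e` both carry the scalar `q⁻²`.
    have ge' := inv_comm (pow_ne_zero 2 hq) D.gg' D.g'g D.ge
    have key : (1 ⊗ₜ D.e + D.e ⊗ₜ D.g) * (D.f ⊗ₜ 1 + D.g' ⊗ₜ D.f)
        - (D.f ⊗ₜ 1 + D.g' ⊗ₜ D.f) * (1 ⊗ₜ D.e + D.e ⊗ₜ D.g)
        = D.g' ⊗ₜ[ℂ] (D.e * D.f - D.f * D.e) + (D.e * D.f - D.f * D.e) ⊗ₜ[ℂ] D.g := by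
      simp only [mul_add, add_mul, Algebra.TensorProduct.tmul_mul_tmul, one_mul, mul_one,
        TensorProduct.tmul_sub, TensorProduct.sub_tmul, D.gf, ge', TensorProduct.tmul_smul,
        TensorProduct.smul_tmul']
      abel
    rw [key, D.ef, TensorProduct.tmul_smul, ← TensorProduct.smul_tmul', ← smul_add,
      TensorProduct.tmul_sub, TensorProduct.sub_tmul]
    congr 1
    abel

/-- Twist data in the base field defining the counit. -/
def counit (q : ℂ) : TwistData q ℂ where
  p := 1
  g := 1
  g' := 1
  e := 0
  f := 0
  gg' := by simp
  g'g := by simp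
  pp := by simp
  pg := by simp
  pe := by simp
  pf := by simp
  ge := by simp
  gf := by simp
  ef := by simp

open MulOpposite in
/-- Twist data in the opposite algebra defining the antipode. -/
def antipode (D : TwistData q A) (hq : q ≠ 0) : TwistData q Aᵐᵒᵖ where
  p := op D.p
  g := op D.g'
  g' := op D.g
  e := op (-(D.e * D.g'))
  f := op (-(D.g * D.f))
  gg' := by rw [← op_mul, D.gg', op_one]
  g'g := by rw [← op_mul, D.g'g, op_one]
  pp := by rw [← op_mul, D.pp]
  pg := by rw [← op_mul, ← op_mul, D.pg']
  pe := by
    rw [← op_mul, ← op_mul, ← op_sub]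
    congr 1
    rw [neg_mul, mul_neg, mul_assoc, ← D.pg', ← mul_assoc, ← mul_assoc, D.pe]
    noncomm_ring
  pf := by
    rw [← op_mul, ← op_mul, ← op_sub]
    congr 1
    rw [neg_mul, mul_neg, ← mul_assoc, D.pg, mul_assoc, mul_assoc, D.pf]
    noncomm_ring
  ge := by
    have ge' := inv_comm (pow_ne_zero 2 hq) D.gg' D.g'g D.ge
    rw [← op_mul, ← op_mul, ← op_smul]
    congr 1
    rw [mul_neg, ← mul_assoc, ge', smul_mul_assoc, smul_neg, smul_smul,
      mul_inv_cancel₀ (pow_ne_zero 2 hq), one_smul, neg_mul]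
  gf := by
    rw [← op_mul, ← op_mul, ← op_smul]
    congr 1
    rw [neg_mul, mul_neg, ← mul_assoc D.g', D.g'g, one_mul, D.gf, smul_mul_assoc, mul_assoc,
      D.gg', mul_one, smul_neg]
  ef := by
    rw [← op_mul, ← op_mul, ← op_sub, ← op_sub, ← op_smul]
    congr 1
    have h1 : D.g * D.f * (D.e * D.g') = D.f * D.e := by
      rw [D.gf, smul_mul_assoc, mul_assoc, ← mul_assoc D.g, D.ge, smul_mul_assoc, mul_smul_comm,
        smul_smul, inv_mul_cancel₀ (pow_ne_zero 2 hq), one_smul, mul_assoc D.e, D.gg', mul_one]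
    have h2 : D.e * D.g' * (D.g * D.f) = D.e * D.f := by
      rw [mul_assoc, ← mul_assoc D.g', D.g'g, one_mul]
    rw [neg_mul_neg, neg_mul_neg, h1, h2, ← neg_sub, D.ef, ← smul_neg, neg_sub]

end TwistData

/-! ### Reduction to generators -/

section Generators

variable {q : ℂ}

/-- A property stable under sums, products and scalars holds on `U_{K,L,twist}` as soon as it holds
for the six generators. -/
lemma Utwist.induction {C : Utwist q → Prop} (hc : ∀ c : ℂ, C (algebraMap ℂ _ c))
    (hK : C (tK q)) (hKb : C (tKb q)) (hL : C (tL q)) (hLb : C (tLb q)) (hE : C (tE q))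
    (hF : C (tF q)) (hm : ∀ x y, C x → C y → C (x * y)) (ha : ∀ x y, C x → C y → C (x + y))
    (x : Utwist q) : C x := by
  obtain ⟨a, rfl⟩ := RingQuot.mkAlgHom_surjective ℂ (relTwist q) x
  induction a using FreeAlgebra.induction with
  | grade0 c => simpa using hc c
  | grade1 i => cases i <;> assumption
  | mul a b h1 h2 => simpa using hm _ _ h1 h2
  | add a b h1 h2 => simpa using ha _ _ h1 h2

lemma Utwist.hom_ext {B : Type} [Semiring B] [Algebra ℂ B] {φ ψ : Utwist q →ₐ[ℂ] B}
    (hK : φ (tK q) = ψ (tK q)) (hKb : φ (tKb q) = ψ (tKb q)) (hL : φ (tL q) = ψ (tL q))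
    (hLb : φ (tLb q) = ψ (tLb q)) (hE : φ (tE q) = ψ (tE q)) (hF : φ (tF q) = ψ (tF q)) :
    φ = ψ := by
  refine AlgHom.ext fun x => ?_
  refine Utwist.induction (C := fun x => φ x = ψ x) (fun c => by simp) hK hKb hL hLb hE hF
    (fun x y hx hy => by simp [hx, hy]) (fun x y hx hy => by simp [hx, hy]) x

end Generators

/-! ### The antipode identities on products -/

section Convolution

variable {A : Type} [Ring A] [Algebra ℂ A] (Δ : A →ₐ[ℂ] A ⊗[ℂ] A) (ε : A →ₐ[ℂ] ℂ)
  (S : A →ₗ[ℂ] A)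

/-- `Σ S(x₁y₁) x₂ y₂ = Σ S(y₁) (Σ S(x₁) x₂) y₂`, so the left antipode identity passes to
products. -/
lemma conv_left_mul (hS : ∀ x y, S (x * y) = S y * S x) {x y : A}
    (hx : conv Δ S LinearMap.id x = unitCounit ε x)
    (hy : conv Δ S LinearMap.id y = unitCounit ε y) :
    conv Δ S LinearMap.id (x * y) = unitCounit ε (x * y) := by
  set m := (LinearMap.mul' ℂ A).comp (TensorProduct.map S LinearMap.id) with hm
  have h1 : ∀ (a : A ⊗[ℂ] A) (u v : A), m (a * (u ⊗ₜ v)) = S u * m a * v := by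
    intro a u v
    induction a with
    | zero => simp
    | add a b ha hb => simp only [add_mul, mul_add, map_add, ha, hb]
    | tmul a b => simp [hm, hS, mul_assoc]
  have hx' : m (Δ x) = algebraMap ℂ A (ε x) := hx
  have hy' : m (Δ y) = algebraMap ℂ A (ε y) := hy
  have h2 : ∀ t : A ⊗[ℂ] A, m (Δ x * t) = ε x • m t := by
    intro t
    induction t with
    | zero => simp
    | add a b ha hb => simp only [mul_add, map_add, ha, hb, smul_add]
    | tmul u v =>
      rw [h1, hx', ← Algebra.commutes, mul_assoc, ← Algebra.smul_def]
      simp [hm]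
  change m (Δ (x * y)) = algebraMap ℂ A (ε (x * y))
  rw [map_mul, h2, hy', map_mul, map_mul, Algebra.smul_def]

/-- `Σ x₁ y₁ S(x₂y₂) = Σ x₁ (Σ y₁ S(y₂)) S(x₂)`, so the right antipode identity passes to
products. -/
lemma conv_right_mul (hS : ∀ x y, S (x * y) = S y * S x) {x y : A}
    (hx : conv Δ LinearMap.id S x = unitCounit ε x)
    (hy : conv Δ LinearMap.id S y = unitCounit ε y) :
    conv Δ LinearMap.id S (x * y) = unitCounit ε (x * y) := by
  set m := (LinearMap.mul' ℂ A).comp (TensorProduct.map LinearMap.id S) with hm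
  have h1 : ∀ (a : A ⊗[ℂ] A) (u v : A), m ((u ⊗ₜ v) * a) = u * m a * S v := by
    intro a u v
    induction a with
    | zero => simp
    | add a b ha hb => simp only [add_mul, mul_add, map_add, ha, hb]
    | tmul a b => simp [hm, hS, mul_assoc]
  have hx' : m (Δ x) = algebraMap ℂ A (ε x) := hx
  have hy' : m (Δ y) = algebraMap ℂ A (ε y) := hy
  have h2 : ∀ t : A ⊗[ℂ] A, m (t * Δ y) = ε y • m t := by
    intro t
    induction t with
    | zero => simp
    | add a b ha hb => simp only [add_mul, map_add, ha, hb, smul_add]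
    | tmul u v =>
      rw [h1, hy', ← Algebra.commutes, mul_assoc, ← Algebra.smul_def]
      simp [hm]
  change m (Δ (x * y)) = algebraMap ℂ A (ε (x * y))
  rw [map_mul, h2, hx', map_mul, map_mul, Algebra.smul_def, Algebra.commutes]

lemma left_cancel {R : Type} [Ring R] {e g g' : R} (h : g' * g = 1) :
    1 * e + -(e * g') * g = 0 := by
  rw [neg_mul, mul_assoc, h]
  simp

lemma right_cancel {R : Type} [Ring R] {f g g' : R} (h : g' * g = 1) :
    f * 1 + g' * -(g * f) = 0 := by
  rw [mul_neg, ← mul_assoc, h]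
  simp

end Convolution

/-- `U_{K,L,twist}` carries a Hopf algebra structure with the indicated
comultiplication, counit, and antipode `S` (an algebra antihomomorphism),
satisfying `(S ⋆ id)(X) = (id ⋆ S)(X) = ε(X)·1` for all `X`. -/
theorem statement15 (q : ℂ) (hq0 : q ≠ 0) (hq1 : q ≠ 1) (hqm1 : q ≠ -1) :
    ∃ Δ : Utwist q →ₐ[ℂ] Utwist q ⊗[ℂ] Utwist q, ∃ ε : Utwist q →ₐ[ℂ] ℂ,
      IsCoassoc Δ ∧ IsCounit Δ ε ∧
      Δ (tK q) = tK q ⊗ₜ[ℂ] tK q + tL q ⊗ₜ[ℂ] tL q ∧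
      Δ (tKb q) = tKb q ⊗ₜ[ℂ] tKb q + tLb q ⊗ₜ[ℂ] tLb q ∧
      Δ (tL q) = tL q ⊗ₜ[ℂ] tK q + tK q ⊗ₜ[ℂ] tL q ∧
      Δ (tLb q) = tLb q ⊗ₜ[ℂ] tKb q + tKb q ⊗ₜ[ℂ] tLb q ∧
      Δ (tE q) = 1 ⊗ₜ[ℂ] tE q + tE q ⊗ₜ[ℂ] (tK q + tL q) ∧
      Δ (tF q) = tF q ⊗ₜ[ℂ] 1 + (tKb q + tLb q) ⊗ₜ[ℂ] tF q ∧
      ε (tK q) = 1 ∧ ε (tKb q) = 1 ∧ ε (tL q) = 0 ∧ ε (tLb q) = 0 ∧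
      ε (tE q) = 0 ∧ ε (tF q) = 0 ∧
      ∃ S : Utwist q →ₗ[ℂ] Utwist q,
        (∀ x y : Utwist q, S (x * y) = S y * S x) ∧ S 1 = 1 ∧
        S (tK q) = tKb q ∧ S (tKb q) = tK q ∧
        S (tL q) = tLb q ∧ S (tLb q) = tL q ∧
        S (tE q) = -(tE q * (tKb q + tLb q)) ∧
        S (tF q) = -((tK q + tL q) * tF q) ∧
        conv Δ S LinearMap.id = unitCounit ε ∧
        conv Δ LinearMap.id S = unitCounit ε := by
  set D := univData q hq0
  have e_g : D.g = tK q + tL q := rfl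
  have e_g' : D.g' = tKb q + tLb q := rfl
  have e_K : tK q = D.p * D.g := (univ_K q hq0).symm
  have e_Kb : tKb q = D.p * D.g' := (univ_Kb q hq0).symm
  have e_L : tL q = (1 - D.p) * D.g := (univ_L q hq0).symm
  have e_Lb : tLb q = (1 - D.p) * D.g' := (univ_Lb q hq0).symm
  obtain ⟨Δ, ΔK, ΔKb, ΔL, ΔLb, ΔE, ΔF⟩ : ∃ Δ : Utwist q →ₐ[ℂ] Utwist q ⊗[ℂ] Utwist q,
      Δ (tK q) = tK q ⊗ₜ[ℂ] tK q + tL q ⊗ₜ[ℂ] tL q ∧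
      Δ (tKb q) = tKb q ⊗ₜ[ℂ] tKb q + tLb q ⊗ₜ[ℂ] tLb q ∧
      Δ (tL q) = tL q ⊗ₜ[ℂ] tK q + tK q ⊗ₜ[ℂ] tL q ∧
      Δ (tLb q) = tLb q ⊗ₜ[ℂ] tKb q + tKb q ⊗ₜ[ℂ] tLb q ∧
      Δ (tE q) = 1 ⊗ₜ[ℂ] tE q + tE q ⊗ₜ[ℂ] (tK q + tL q) ∧
      Δ (tF q) = tF q ⊗ₜ[ℂ] 1 + (tKb q + tLb q) ⊗ₜ[ℂ] tF q := by
    refine ⟨(D.comul hq0).lift hq0, ?_, ?_, ?_, ?_, ?_, ?_⟩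
    · rw [TwistData.lift_K, e_K, e_L]
      simp [TwistData.comul, add_mul]
    · rw [TwistData.lift_Kb, e_Kb, e_Lb]
      simp [TwistData.comul, add_mul]
    · rw [TwistData.lift_L, e_K, e_L]
      simp only [TwistData.comul, add_mul, sub_mul, one_mul, TensorProduct.tmul_sub,
        TensorProduct.sub_tmul, Algebra.TensorProduct.tmul_mul_tmul]
      abel
    · rw [TwistData.lift_Lb, e_Kb, e_Lb]
      simp only [TwistData.comul, add_mul, sub_mul, one_mul, TensorProduct.tmul_sub,
        TensorProduct.sub_tmul, Algebra.TensorProduct.tmul_mul_tmul]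
      abel
    · rw [TwistData.lift_E]
      rfl
    · rw [TwistData.lift_F]
      rfl
  obtain ⟨ε, εK, εKb, εL, εLb, εE, εF⟩ : ∃ ε : Utwist q →ₐ[ℂ] ℂ,
      ε (tK q) = 1 ∧ ε (tKb q) = 1 ∧ ε (tL q) = 0 ∧ ε (tLb q) = 0 ∧
      ε (tE q) = 0 ∧ ε (tF q) = 0 := by
    refine ⟨(TwistData.counit q).lift hq0, ?_, ?_, ?_, ?_, ?_, ?_⟩ <;>
      simp [TwistData.lift_K, TwistData.lift_Kb, TwistData.lift_L, TwistData.lift_Lb,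
        TwistData.lift_E, TwistData.lift_F, TwistData.counit]
  obtain ⟨S, hS, S1, SK, SKb, SL, SLb, SE, SF⟩ : ∃ S : Utwist q →ₗ[ℂ] Utwist q,
      (∀ x y : Utwist q, S (x * y) = S y * S x) ∧ S 1 = 1 ∧
      S (tK q) = tKb q ∧ S (tKb q) = tK q ∧
      S (tL q) = tLb q ∧ S (tLb q) = tL q ∧
      S (tE q) = -(tE q * (tKb q + tLb q)) ∧
      S (tF q) = -((tK q + tL q) * tF q) := by
    have hv : ∀ x, ((MulOpposite.opLinearEquiv ℂ).symm.toLinearMap.comp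
        ((D.antipode hq0).lift hq0).toLinearMap) x
        = MulOpposite.unop ((D.antipode hq0).lift hq0 x) := fun _ => rfl
    refine ⟨(MulOpposite.opLinearEquiv ℂ).symm.toLinearMap.comp
      ((D.antipode hq0).lift hq0).toLinearMap, fun x y => ?_, ?_, ?_, ?_, ?_, ?_, ?_, ?_⟩
    · simp only [hv, map_mul, MulOpposite.unop_mul]
    · rw [hv, map_one, MulOpposite.unop_one]
    · rw [hv, TwistData.lift_K, e_Kb]
      exact D.pg'.symm
    · rw [hv, TwistData.lift_Kb, e_K]
      exact D.pg.symm
    · rw [hv, TwistData.lift_L, e_Lb]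
      change D.g' * (1 - D.p) = _
      rw [mul_sub, sub_mul, D.pg', mul_one, one_mul]
    · rw [hv, TwistData.lift_Lb, e_L]
      change D.g * (1 - D.p) = _
      rw [mul_sub, sub_mul, D.pg, mul_one, one_mul]
    · rw [hv, TwistData.lift_E]
      rfl
    · rw [hv, TwistData.lift_F]
      rfl
  refine ⟨Δ, ε, ?_, ⟨?_, ?_⟩, ΔK, ΔKb, ΔL, ΔLb, ΔE, ΔF, εK, εKb, εL, εLb, εE, εF,
    S, hS, S1, SK, SKb, SL, SLb, SE, SF, ?_, ?_⟩
  · have hassoc (a b c : Utwist q) :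
        (Algebra.TensorProduct.assoc ℂ ℂ ℂ (Utwist q) (Utwist q) (Utwist q)).toAlgHom
          (a ⊗ₜ[ℂ] b ⊗ₜ[ℂ] c) = a ⊗ₜ[ℂ] (b ⊗ₜ[ℂ] c) := rfl
    have h : (Algebra.TensorProduct.assoc ℂ ℂ ℂ (Utwist q) (Utwist q) (Utwist q)).toAlgHom.comp
        ((Algebra.TensorProduct.map Δ (AlgHom.id ℂ (Utwist q))).comp Δ)
        = (Algebra.TensorProduct.map (AlgHom.id ℂ (Utwist q)) Δ).comp Δ := by
      apply Utwist.hom_ext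
      all_goals
        simp only [AlgHom.comp_apply, ΔK, ΔKb, ΔL, ΔLb, ΔE, ΔF, map_add, map_one,
          Algebra.TensorProduct.map_tmul, AlgHom.id_apply, TensorProduct.add_tmul,
          TensorProduct.tmul_add, Algebra.TensorProduct.one_def, hassoc]
        abel
    exact fun x => DFunLike.congr_fun h x
  · have h : (Algebra.TensorProduct.lid ℂ (Utwist q)).toAlgHom.comp
        ((Algebra.TensorProduct.map ε (AlgHom.id ℂ (Utwist q))).comp Δ)
        = AlgHom.id ℂ (Utwist q) := by
      apply Utwist.hom_ext <;>
        simp [ΔK, ΔKb, ΔL, ΔLb, ΔE, ΔF, εK, εKb, εL, εLb, εE, εF]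
    exact fun x => DFunLike.congr_fun h x
  · have h : (Algebra.TensorProduct.rid ℂ ℂ (Utwist q)).toAlgHom.comp
        ((Algebra.TensorProduct.map (AlgHom.id ℂ (Utwist q)) ε).comp Δ)
        = AlgHom.id ℂ (Utwist q) := by
      apply Utwist.hom_ext <;>
        simp [ΔK, ΔKb, ΔL, ΔLb, ΔE, ΔF, εK, εKb, εL, εLb, εE, εF]
    exact fun x => DFunLike.congr_fun h x
  · ext x
    have hgg := D.g'g
    rw [e_g, e_g'] at hgg
    refine Utwist.induction (C := fun x => conv Δ S LinearMap.id x = unitCounit ε x)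
      (fun c => ?_) ?_ ?_ ?_ ?_ ?_ ?_ (fun x y => conv_left_mul Δ ε S hS)
      (fun x y hx hy => by simp only [map_add, hx, hy]) x
    · simp [conv, unitCounit, Algebra.TensorProduct.one_def, S1, Algebra.algebraMap_eq_smul_one]
    · simp [conv, unitCounit, ΔK, SK, SL, εK, ← t_kc, ← t_lc, t_pq]
    · simp [conv, unitCounit, ΔKb, SKb, SLb, εKb, t_pq]
    · simp [conv, unitCounit, ΔL, SK, SL, εL, t_LbK, t_KbL]
    · simp [conv, unitCounit, ΔLb, SKb, SLb, εLb, t_LKb, t_KLb]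
    · simp only [conv, unitCounit, LinearMap.comp_apply, AlgHom.toLinearMap_apply, ΔE, map_add,
        TensorProduct.map_tmul, LinearMap.mul'_apply, LinearMap.id_apply, S1, SE, εE]
      exact (left_cancel hgg).trans (map_zero _).symm
    · simp only [conv, unitCounit, LinearMap.comp_apply, AlgHom.toLinearMap_apply, ΔF, map_add,
        TensorProduct.map_tmul, LinearMap.mul'_apply, LinearMap.id_apply, SF, SKb, SLb, εF]
      simp
  · ext x
    have hgg := D.g'g
    rw [e_g, e_g'] at hgg
    refine Utwist.induction (C := fun x => conv Δ LinearMap.id S x = unitCounit ε x)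
      (fun c => ?_) ?_ ?_ ?_ ?_ ?_ ?_ (fun x y => conv_right_mul Δ ε S hS)
      (fun x y hx hy => by simp only [map_add, hx, hy]) x
    · simp [conv, unitCounit, Algebra.TensorProduct.one_def, S1, Algebra.algebraMap_eq_smul_one]
    · simp [conv, unitCounit, ΔK, SK, SL, εK, t_pq]
    · simp [conv, unitCounit, ΔKb, SKb, SLb, εKb, ← t_kc, ← t_lc, t_pq]
    · simp [conv, unitCounit, ΔL, SK, SL, εL, t_LKb, t_KLb]
    · simp [conv, unitCounit, ΔLb, SKb, SLb, εLb, t_LbK, t_KbL]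
    · simp only [conv, unitCounit, LinearMap.comp_apply, AlgHom.toLinearMap_apply, ΔE, map_add,
        TensorProduct.map_tmul, LinearMap.mul'_apply, LinearMap.id_apply, SE, SK, SL, εE]
      simp
    · simp only [conv, unitCounit, LinearMap.comp_apply, AlgHom.toLinearMap_apply, ΔF, map_add,
        TensorProduct.map_tmul, LinearMap.mul'_apply, LinearMap.id_apply, S1, SF, εF]
      exact (right_cancel hgg).trans (map_zero _).symm
end
end

section
/- In the tensor product algebra U_{K,L,twist} ⊗ U_{K,L,twist}, for all natural numbers m, i, j the element Eᵐ(Kⁱ + Lⁱ) ⊗ Fᵐ(Kʲ + Lʲ) commutes both with K ⊗ K + L ⊗ L and with K̄ ⊗ K̄ + L̄ ⊗ L̄. -/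
/-!
The elements `P = K K̄` and `Q = L L̄` are complementary idempotents, `K, K̄` are absorbed by `P` and
`L, L̄` by `Q`; hence the two pairs annihilate each other and `K, K̄, L, L̄` all commute
(`commute_cartan`). In particular `Kⁱ + Lⁱ` commutes with each of them.

Moving `K` or `L` past `E` swaps `K` and `L` and produces the scalar `q²`, while moving past `F`
makes the same swap with scalar `q⁻²`. In the tensor square the scalars cancel, so `E ⊗ F` exchanges
`K ⊗ K` with `L ⊗ L` and commutes with their sum; the same holds for `K̄ ⊗ K̄ + L̄ ⊗ L̄`
(`commute_twisted_tmul`). Finally `Eᵐ(Kⁱ + Lⁱ) ⊗ Fᵐ(Kʲ + Lʲ)` is `(E ⊗ F)ᵐ` times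
`(Kⁱ + Lⁱ) ⊗ (Kʲ + Lʲ)`, a product of two elements of the commutant.
-/

noncomputable section

open scoped TensorProduct

lemma tK_mul_tKb_mul_tK (q : ℂ) : tK q * tKb q * tK q = tK q := by
  simpa [tK, tKb] using RingQuot.mkAlgHom_rel ℂ (relTwist.kkk (q := q))

lemma tKb_mul_tK_mul_tKb (q : ℂ) : tKb q * tK q * tKb q = tKb q := by
  simpa [tK, tKb] using RingQuot.mkAlgHom_rel ℂ (relTwist.kbk (q := q))

lemma commute_tK_tKb (q : ℂ) : Commute (tK q) (tKb q) := by
  simpa [Commute, SemiconjBy, tK, tKb] using RingQuot.mkAlgHom_rel ℂ (relTwist.kc (q := q))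

lemma tL_mul_tLb_mul_tL (q : ℂ) : tL q * tLb q * tL q = tL q := by
  simpa [tL, tLb] using RingQuot.mkAlgHom_rel ℂ (relTwist.lll (q := q))

lemma tLb_mul_tL_mul_tLb (q : ℂ) : tLb q * tL q * tLb q = tLb q := by
  simpa [tL, tLb] using RingQuot.mkAlgHom_rel ℂ (relTwist.lbl (q := q))

lemma commute_tL_tLb (q : ℂ) : Commute (tL q) (tLb q) := by
  simpa [Commute, SemiconjBy, tL, tLb] using RingQuot.mkAlgHom_rel ℂ (relTwist.lc (q := q))

lemma tK_tKb_add_tL_tLb (q : ℂ) : tK q * tKb q + tL q * tLb q = 1 := by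
  simpa [tK, tKb, tL, tLb] using RingQuot.mkAlgHom_rel ℂ (relTwist.pq (q := q))

lemma tK_mul_tE (q : ℂ) : tK q * tE q = q ^ 2 • (tE q * tL q) := by
  simpa [tK, tL, tE] using RingQuot.mkAlgHom_rel ℂ (relTwist.ke (q := q))

lemma tL_mul_tE (q : ℂ) : tL q * tE q = q ^ 2 • (tE q * tK q) := by
  simpa [tK, tL, tE] using RingQuot.mkAlgHom_rel ℂ (relTwist.le (q := q))

lemma tKb_mul_tE (q : ℂ) : tKb q * tE q = (q ^ 2)⁻¹ • (tE q * tLb q) := by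
  simpa [tKb, tLb, tE] using RingQuot.mkAlgHom_rel ℂ (relTwist.kbe (q := q))

lemma tLb_mul_tE (q : ℂ) : tLb q * tE q = (q ^ 2)⁻¹ • (tE q * tKb q) := by
  simpa [tKb, tLb, tE] using RingQuot.mkAlgHom_rel ℂ (relTwist.lbe (q := q))

lemma tK_mul_tF (q : ℂ) : tK q * tF q = (q ^ 2)⁻¹ • (tF q * tL q) := by
  simpa [tK, tL, tF] using RingQuot.mkAlgHom_rel ℂ (relTwist.kf (q := q))

lemma tL_mul_tF (q : ℂ) : tL q * tF q = (q ^ 2)⁻¹ • (tF q * tK q) := by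
  simpa [tK, tL, tF] using RingQuot.mkAlgHom_rel ℂ (relTwist.lf (q := q))

lemma tKb_mul_tF (q : ℂ) : tKb q * tF q = q ^ 2 • (tF q * tLb q) := by
  simpa [tKb, tLb, tF] using RingQuot.mkAlgHom_rel ℂ (relTwist.kbf (q := q))

lemma tLb_mul_tF (q : ℂ) : tLb q * tF q = q ^ 2 • (tF q * tKb q) := by
  simpa [tKb, tLb, tF] using RingQuot.mkAlgHom_rel ℂ (relTwist.lbf (q := q))

/-- If `e + f = 1`, `x` absorbs the idempotent `e` on the right and `y` absorbs `f`
on the left, then `x * y = 0`. -/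
lemma mul_eq_zero_of_complementary {A : Type*} [Ring A] {e f x y : A}
    (he : e * e = e) (hef : e + f = 1) (hx : x * e = x) (hy : f * y = y) : x * y = 0 := by
  have hf : f = 1 - e := eq_sub_of_add_eq' hef
  have hzero : e * f = 0 := by rw [hf, mul_sub, mul_one, he, sub_self]
  calc x * y = (x * e) * (f * y) := by rw [hx, hy]
    _ = x * (e * f) * y := by noncomm_ring
    _ = 0 := by rw [hzero, mul_zero, zero_mul]

/-- For inner-inverse pairs `(x, x')` and `(y, y')` with complementary idempotents `x * x'` and
`y * y'`, the first pair annihilates the second from the left. -/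
lemma annihilate_of_complementary {A : Type*} [Ring A] {x x' y y' : A}
    (h1 : x * x' * x = x) (h2 : x' * x * x' = x') (hx : Commute x x')
    (h3 : y * y' * y = y) (h4 : y' * y * y' = y') (hy : Commute y y')
    (h : x * x' + y * y' = 1) :
    x * y = 0 ∧ x * y' = 0 ∧ x' * y = 0 ∧ x' * y' = 0 := by
  have he : x * x' * (x * x') = x * x' := by rw [← mul_assoc, h1]
  have hxe : x * (x * x') = x := by rw [hx.eq, ← mul_assoc, h1]
  have hxe' : x' * (x * x') = x' := by rw [← mul_assoc, h2]
  have hfy' : y * y' * y' = y' := by rw [hy.eq, h4]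
  exact ⟨mul_eq_zero_of_complementary he h hxe h3, mul_eq_zero_of_complementary he h hxe hfy',
    mul_eq_zero_of_complementary he h hxe' h3, mul_eq_zero_of_complementary he h hxe' hfy'⟩

/-- The pairs `K, K̄` and `L, L̄` annihilate each other, hence commute. -/
lemma commute_cartan (q : ℂ) :
    Commute (tK q) (tL q) ∧ Commute (tK q) (tLb q) ∧
      Commute (tKb q) (tL q) ∧ Commute (tKb q) (tLb q) := by
  obtain ⟨a1, a2, a3, a4⟩ := annihilate_of_complementary (tK_mul_tKb_mul_tK q)
    (tKb_mul_tK_mul_tKb q) (commute_tK_tKb q) (tL_mul_tLb_mul_tL q) (tLb_mul_tL_mul_tLb q)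
    (commute_tL_tLb q) (tK_tKb_add_tL_tLb q)
  obtain ⟨b1, b2, b3, b4⟩ := annihilate_of_complementary (tL_mul_tLb_mul_tL q)
    (tLb_mul_tL_mul_tLb q) (commute_tL_tLb q) (tK_mul_tKb_mul_tK q) (tKb_mul_tK_mul_tKb q)
    (commute_tK_tKb q) ((add_comm _ _).trans (tK_tKb_add_tL_tLb q))
  exact ⟨a1.trans b1.symm, a2.trans b3.symm, a3.trans b2.symm, a4.trans b4.symm⟩

/-- Moving past `e ⊗ f` interchanges `x ⊗ x` and `y ⊗ y`, since `c * d = 1`;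
so `e ⊗ f` commutes with `x ⊗ x + y ⊗ y`. The right factors `s`, `t` commute with `x` and `y`. -/
lemma commute_twisted_tmul {A : Type*} [Ring A] [Algebra ℂ A] {c d : ℂ} (hcd : c * d = 1)
    {x y e f s t : A}
    (hxe : x * e = c • (e * y)) (hye : y * e = c • (e * x))
    (hxf : x * f = d • (f * y)) (hyf : y * f = d • (f * x))
    (hsx : Commute s x) (hsy : Commute s y) (htx : Commute t x) (hty : Commute t y) (m : ℕ) :
    Commute ((e ^ m * s) ⊗ₜ[ℂ] (f ^ m * t)) (x ⊗ₜ[ℂ] x + y ⊗ₜ[ℂ] y : A ⊗[ℂ] A) := by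
  have hef : Commute (e ⊗ₜ[ℂ] f) (x ⊗ₜ[ℂ] x + y ⊗ₜ[ℂ] y : A ⊗[ℂ] A) := by
    rw [Commute, SemiconjBy, add_mul, mul_add]
    simp only [Algebra.TensorProduct.tmul_mul_tmul, hxe, hye, hxf, hyf,
      TensorProduct.smul_tmul_smul, hcd, one_smul]
    exact add_comm _ _
  have hst : Commute (s ⊗ₜ[ℂ] t) (x ⊗ₜ[ℂ] x + y ⊗ₜ[ℂ] y : A ⊗[ℂ] A) := by
    rw [Commute, SemiconjBy, add_mul, mul_add]
    simp only [Algebra.TensorProduct.tmul_mul_tmul, hsx.eq, hsy.eq, htx.eq, hty.eq]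
  rw [← Algebra.TensorProduct.tmul_mul_tmul, ← Algebra.TensorProduct.tmul_pow]
  exact (hef.pow_left m).mul_left hst

/-- In `U_{K,L,twist} ⊗ U_{K,L,twist}`, for all `m, i, j ∈ ℕ` the element
`Eᵐ(Kⁱ + Lⁱ) ⊗ Fᵐ(Kʲ + Lʲ)` commutes with `K ⊗ K + L ⊗ L` and with
`K̄ ⊗ K̄ + L̄ ⊗ L̄`. -/
theorem statement16 (q : ℂ) (hq0 : q ≠ 0) (hq1 : q ≠ 1) (hqm1 : q ≠ -1)
    (m i j : ℕ) :
    Commute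
      ((tE q ^ m * (tK q ^ i + tL q ^ i)) ⊗ₜ[ℂ] (tF q ^ m * (tK q ^ j + tL q ^ j)))
      ((tK q ⊗ₜ[ℂ] tK q + tL q ⊗ₜ[ℂ] tL q) : Utwist q ⊗[ℂ] Utwist q) ∧
    Commute
      ((tE q ^ m * (tK q ^ i + tL q ^ i)) ⊗ₜ[ℂ] (tF q ^ m * (tK q ^ j + tL q ^ j)))
      ((tKb q ⊗ₜ[ℂ] tKb q + tLb q ⊗ₜ[ℂ] tLb q) : Utwist q ⊗[ℂ] Utwist q) := by
  have hq2 : q ^ 2 ≠ 0 := pow_ne_zero 2 hq0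
  obtain ⟨hKL, hKLb, hKbL, hKbLb⟩ := commute_cartan q
  have hK (n : ℕ) : Commute (tK q ^ n + tL q ^ n) (tK q) :=
    ((Commute.refl _).pow_left n).add_left (hKL.symm.pow_left n)
  have hL (n : ℕ) : Commute (tK q ^ n + tL q ^ n) (tL q) :=
    (hKL.pow_left n).add_left ((Commute.refl _).pow_left n)
  have hKb (n : ℕ) : Commute (tK q ^ n + tL q ^ n) (tKb q) :=
    ((commute_tK_tKb q).pow_left n).add_left (hKbL.symm.pow_left n)
  have hLb (n : ℕ) : Commute (tK q ^ n + tL q ^ n) (tLb q) :=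
    (hKLb.pow_left n).add_left ((commute_tL_tLb q).pow_left n)
  exact ⟨commute_twisted_tmul (mul_inv_cancel₀ hq2) (tK_mul_tE q) (tL_mul_tE q) (tK_mul_tF q)
      (tL_mul_tF q) (hK i) (hL i) (hK j) (hL j) m,
    commute_twisted_tmul (inv_mul_cancel₀ hq2) (tKb_mul_tE q) (tLb_mul_tE q) (tKb_mul_tF q)
      (tLb_mul_tF q) (hKb i) (hLb i) (hKb j) (hLb j) m⟩
end
end

section
/- In U^{31}_{K,L,norm}, the idempotents P = K K̄ and Q = L L̄ are central; in particular P E = E P, P F = F P, Q E = E Q, and Q F = F Q. -/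
/-! The relation `K E K̄ = q² E P` and `P K = K` give `P E P = E P`; likewise `Q E Q = E Q`. Since
`P + Q = 1`, the second identity says `P E Q = 0`, so `P E = P E P = E P`; the same argument works
for `F`. As `P` commutes with `K, K̄` and `Q = 1 - P` commutes with `L, L̄`, both idempotents commute
with all generators, hence are central. -/

noncomputable section

/-- The common "Cartan" relations. -/
inductive relCartan : FA6 → FA6 → Prop
  | kkk : relCartan (XK * XKb * XK) XK
  | kbk : relCartan (XKb * XK * XKb) XKb
  | kc : relCartan (XK * XKb) (XKb * XK)
  | lll : relCartan (XL * XLb * XL) XL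
  | lbl : relCartan (XLb * XL * XLb) XLb
  | lc : relCartan (XL * XLb) (XLb * XL)
  | pq : relCartan (XK * XKb + XL * XLb) 1

/-- Relations of `U_{K,L,norm}` (the 22-version). -/
inductive relNorm22 (q : ℂ) : FA6 → FA6 → Prop
  | cartan {x y : FA6} : relCartan x y → relNorm22 q x y
  | ke : relNorm22 q (XK * XE) (q ^ 2 • (XE * XK))
  | le : relNorm22 q (XL * XE) (q ^ 2 • (XE * XL))
  | kbe : relNorm22 q (XKb * XE) ((q ^ 2)⁻¹ • (XE * XKb))
  | lbe : relNorm22 q (XLb * XE) ((q ^ 2)⁻¹ • (XE * XLb))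
  | kf : relNorm22 q (XK * XF) ((q ^ 2)⁻¹ • (XF * XK))
  | lf : relNorm22 q (XL * XF) ((q ^ 2)⁻¹ • (XF * XL))
  | kbf : relNorm22 q (XKb * XF) (q ^ 2 • (XF * XKb))
  | lbf : relNorm22 q (XLb * XF) (q ^ 2 • (XF * XLb))
  | ef : relNorm22 q (XE * XF - XF * XE)
      ((q - q⁻¹)⁻¹ • ((XK + XL) - (XKb + XLb)))

/-- Relations of `U^{31}_{K,L,norm}`. -/
inductive relNorm31 (q : ℂ) : FA6 → FA6 → Prop
  | cartan {x y : FA6} : relCartan x y → relNorm31 q x y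
  | ke : relNorm31 q (XK * XE * XKb) (q ^ 2 • (XE * (XK * XKb)))
  | le : relNorm31 q (XL * XE * XLb) (q ^ 2 • (XE * (XL * XLb)))
  | kbe : relNorm31 q (XKb * XE * XK) ((q ^ 2)⁻¹ • (XE * (XK * XKb)))
  | lbe : relNorm31 q (XLb * XE * XL) ((q ^ 2)⁻¹ • (XE * (XL * XLb)))
  | kf : relNorm31 q (XK * XF * XKb) ((q ^ 2)⁻¹ • (XF * (XK * XKb)))
  | lf : relNorm31 q (XL * XF * XLb) ((q ^ 2)⁻¹ • (XF * (XL * XLb)))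
  | kbf : relNorm31 q (XKb * XF * XK) (q ^ 2 • (XF * (XK * XKb)))
  | lbf : relNorm31 q (XLb * XF * XL) (q ^ 2 • (XF * (XL * XLb)))
  | efk : relNorm31 q (XK * XKb * (XE * XF - XF * XE))
      ((q - q⁻¹)⁻¹ • (XK - XKb))
  | efl : relNorm31 q (XL * XLb * (XE * XF - XF * XE))
      ((q - q⁻¹)⁻¹ • (XL - XLb))


abbrev U31norm (q : ℂ) : Type := RingQuot (relNorm31 q)

def uK (q : ℂ) : U31norm q := RingQuot.mkAlgHom ℂ (relNorm31 q) XK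
def uKb (q : ℂ) : U31norm q := RingQuot.mkAlgHom ℂ (relNorm31 q) XKb
def uL (q : ℂ) : U31norm q := RingQuot.mkAlgHom ℂ (relNorm31 q) XL
def uLb (q : ℂ) : U31norm q := RingQuot.mkAlgHom ℂ (relNorm31 q) XLb
def uE (q : ℂ) : U31norm q := RingQuot.mkAlgHom ℂ (relNorm31 q) XE
def uF (q : ℂ) : U31norm q := RingQuot.mkAlgHom ℂ (relNorm31 q) XF
def uP (q : ℂ) : U31norm q := uK q * uKb q
def uQ (q : ℂ) : U31norm q := uL q * uLb q

/-- A twisted conjugation relation `k e k̄ = c e k k̄` with `c ≠ 0` forces the range of the idempotent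
`k k̄` to absorb `e k k̄`. -/
theorem absorb_of_conj {A : Type*} [Ring A] [Algebra ℂ A] {k kb e : A} {c : ℂ} (hc : c ≠ 0)
    (hk : k * kb * k = k) (h : k * e * kb = c • (e * (k * kb))) :
    k * kb * (e * (k * kb)) = e * (k * kb) := by
  have h1 : c • (k * kb * (e * (k * kb))) = c • (e * (k * kb)) := by
    rw [← mul_smul_comm, ← h, ← mul_assoc, ← mul_assoc, hk]
  exact smul_right_injective A hc h1

theorem comm_of_absorb {A : Type*} [Ring A] {p r e : A} (hpr : p + r = 1)
    (hp : p * (e * p) = e * p) (hr : r * (e * r) = e * r) : p * e = e * p := by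
  have h0 : p * (e * r) = 0 := by
    rw [eq_sub_of_add_eq hpr, sub_mul, hr, one_mul, sub_self]
  calc p * e = p * (e * (p + r)) := by rw [hpr, mul_one]
    _ = e * p := by rw [mul_add, mul_add, hp, h0, add_zero]

/-- An element of `U^{31}_{K,L,norm}` commuting with the six generators is central. -/
theorem central_of_generators (q : ℂ) (z : U31norm q)
    (hK : z * uK q = uK q * z) (hKb : z * uKb q = uKb q * z)
    (hL : z * uL q = uL q * z) (hLb : z * uLb q = uLb q * z)
    (hE : z * uE q = uE q * z) (hF : z * uF q = uF q * z) (x : U31norm q) :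
    z * x = x * z := by
  obtain ⟨y, rfl⟩ := RingQuot.mkAlgHom_surjective ℂ (relNorm31 q) x
  induction y using FreeAlgebra.induction with
  | grade0 r => rw [AlgHom.commutes]; exact (Algebra.commutes r z).symm
  | grade1 g => cases g <;> assumption
  | mul a b ha hb => rw [map_mul, ← mul_assoc, ha, mul_assoc, hb, mul_assoc]
  | add a b ha hb => rw [map_add, mul_add, add_mul, ha, hb]

/-- In `U^{31}_{K,L,norm}` the idempotents `P = KK̄` and `Q = LL̄` are central;
in particular `PE = EP`, `PF = FP`, `QE = EQ`, `QF = FQ`. -/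
theorem statement19 (q : ℂ) (hq0 : q ≠ 0) (hq1 : q ≠ 1) (hqm1 : q ≠ -1) :
    (∀ x : U31norm q, uP q * x = x * uP q) ∧
    (∀ x : U31norm q, uQ q * x = x * uQ q) ∧
    uP q * uE q = uE q * uP q ∧ uP q * uF q = uF q * uP q ∧
    uQ q * uE q = uE q * uQ q ∧ uQ q * uF q = uF q * uQ q := by
  have rel {a b : FA6} (h : relNorm31 q a b) :
      RingQuot.mkAlgHom ℂ (relNorm31 q) a = RingQuot.mkAlgHom ℂ (relNorm31 q) b :=
    RingQuot.mkAlgHom_rel ℂ h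
  have hkkk : uK q * uKb q * uK q = uK q := by
    simpa [uP, uQ, uK, uKb, uL, uLb, uE, uF] using rel (.cartan .kkk)
  have hkbk : uKb q * uK q * uKb q = uKb q := by
    simpa [uP, uQ, uK, uKb, uL, uLb, uE, uF] using rel (.cartan .kbk)
  have hkc : uK q * uKb q = uKb q * uK q := by
    simpa [uP, uQ, uK, uKb, uL, uLb, uE, uF] using rel (.cartan .kc)
  have hlll : uL q * uLb q * uL q = uL q := by
    simpa [uP, uQ, uK, uKb, uL, uLb, uE, uF] using rel (.cartan .lll)
  have hlbl : uLb q * uL q * uLb q = uLb q := by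
    simpa [uP, uQ, uK, uKb, uL, uLb, uE, uF] using rel (.cartan .lbl)
  have hlc : uL q * uLb q = uLb q * uL q := by
    simpa [uP, uQ, uK, uKb, uL, uLb, uE, uF] using rel (.cartan .lc)
  have hpq : uP q + uQ q = 1 := by
    simpa [uP, uQ, uK, uKb, uL, uLb, uE, uF] using rel (.cartan .pq)
  have hke : uK q * uE q * uKb q = q ^ 2 • (uE q * (uK q * uKb q)) := by
    simpa [uP, uQ, uK, uKb, uL, uLb, uE, uF] using rel .ke
  have hle : uL q * uE q * uLb q = q ^ 2 • (uE q * (uL q * uLb q)) := by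
    simpa [uP, uQ, uK, uKb, uL, uLb, uE, uF] using rel .le
  have hkf : uK q * uF q * uKb q = (q ^ 2)⁻¹ • (uF q * (uK q * uKb q)) := by
    simpa [uP, uQ, uK, uKb, uL, uLb, uE, uF] using rel .kf
  have hlf : uL q * uF q * uLb q = (q ^ 2)⁻¹ • (uF q * (uL q * uLb q)) := by
    simpa [uP, uQ, uK, uKb, uL, uLb, uE, uF] using rel .lf
  have hc : q ^ 2 ≠ 0 := pow_ne_zero 2 hq0
  have hPE : uP q * uE q = uE q * uP q :=
    comm_of_absorb hpq (absorb_of_conj hc hkkk hke) (absorb_of_conj hc hlll hle)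
  have hPF : uP q * uF q = uF q * uP q :=
    comm_of_absorb hpq (absorb_of_conj (inv_ne_zero hc) hkkk hkf)
      (absorb_of_conj (inv_ne_zero hc) hlll hlf)
  have hQ : uQ q = 1 - uP q := eq_sub_of_add_eq' hpq
  have hP : uP q = 1 - uQ q := eq_sub_of_add_eq hpq
  have hPK : uP q * uK q = uK q * uP q := by
    rw [uP, hkkk, hkc, ← mul_assoc, hkkk]
  have hPKb : uP q * uKb q = uKb q * uP q := by
    rw [uP, ← mul_assoc, hkbk, hkc, hkbk]
  have hPL : uP q * uL q = uL q * uP q := by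
    rw [hP, sub_mul, mul_sub, one_mul, mul_one, uQ, hlll, hlc, ← mul_assoc, hlll]
  have hPLb : uP q * uLb q = uLb q * uP q := by
    rw [hP, sub_mul, mul_sub, one_mul, mul_one, uQ, ← mul_assoc, hlbl, hlc, hlbl]
  have hPc := central_of_generators q (uP q) hPK hPKb hPL hPLb hPE hPF
  have hQc : ∀ x : U31norm q, uQ q * x = x * uQ q := fun x => by
    rw [hQ, sub_mul, mul_sub, one_mul, mul_one, hPc]
  exact ⟨hPc, hQc, hPE, hPF, hQc _, hQc _⟩
end
end
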